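/- arXiv:1608.02792 — 4 statements merged into one kernel-verified Lean document; each statement's English description precedes it below -/
import Mathlib

section
/- Consider the Kronecker-structured dictionary learning problem with N i.i.d. observations y_n = D x_n + η_n, where the true dictionary D lies in X(D₀,r) for a fixed reference dictionary D₀ in the Kronecker dictionary class, and the coefficient vectors x_n are i.i.d. with mean zero and covariance matrix Σ_x. Then for every t with 0 < t < 1 and every c₁ with 0 < c₁ < (1−t)/(8 log 2), the minimax risk satisfies ε* ≥ (t/4) · min{ p, r²/(2K), (σ²/(4 N K ‖Σ_x‖₂)) · ( c₁ · (Σ_{k=1}^K (m_k − 1) p_k) − (K/2) log₂(2K) − 2 ) }. -/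
open MeasureTheory ProbabilityTheory Matrix Real
open scoped NNReal ENNReal

noncomputable section

def frobNormSq {m n : Type*} [Fintype m] [Fintype n] (A : Matrix m n ℝ) : ℝ :=
  ∑ i, ∑ j, A i j ^ 2

def frobNorm {m n : Type*} [Fintype m] [Fintype n] (A : Matrix m n ℝ) : ℝ :=
  Real.sqrt (frobNormSq A)

def kronFamily {K : ℕ} {m p : Fin K → ℕ} (D : ∀ k, Matrix (Fin (m k)) (Fin (p k)) ℝ) :
    Matrix (∀ k, Fin (m k)) (∀ k, Fin (p k)) ℝ :=
  Matrix.of fun i j => ∏ k, D k (i k) (j k)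

def hasUnitColumns {m n : Type*} [Fintype m] (A : Matrix m n ℝ) : Prop :=
  ∀ j, ∑ i, A i j ^ 2 = 1

def ksClass (K : ℕ) (m p : Fin K → ℕ) : Set (Matrix (∀ k, Fin (m k)) (∀ k, Fin (p k)) ℝ) :=
  {D | ∃ Dk : ∀ k, Matrix (Fin (m k)) (Fin (p k)) ℝ,
    (∀ k, hasUnitColumns (Dk k)) ∧ D = kronFamily Dk}

def ksBall (K : ℕ) (m p : Fin K → ℕ)
    (D0 : Matrix (∀ k, Fin (m k)) (∀ k, Fin (p k)) ℝ) (r : ℝ) :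
    Set (Matrix (∀ k, Fin (m k)) (∀ k, Fin (p k)) ℝ) :=
  {D ∈ ksClass K m p | frobNorm (D - D0) < r}

def specNorm {m n : Type*} [Fintype m] [Fintype n] [DecidableEq n] (A : Matrix m n ℝ) : ℝ :=
  ‖LinearMap.toContinuousLinearMap (Matrix.toEuclideanLin A)‖

def sampleLaw {idxM idxP : Type*} [Fintype idxM] [Fintype idxP]
    (D : Matrix idxM idxP ℝ) (ν : Measure (idxP → ℝ)) (σ : ℝ≥0) : Measure (idxM → ℝ) :=
  Measure.map (fun z : (idxP → ℝ) × (idxM → ℝ) => D.mulVec z.1 + z.2)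
    (ν.prod (Measure.pi fun _ : idxM => gaussianReal 0 (σ ^ 2)))

def obsLaw {idxM idxP : Type*} [Fintype idxM] [Fintype idxP] (N : ℕ)
    (D : Matrix idxM idxP ℝ) (ν : Measure (idxP → ℝ)) (σ : ℝ≥0) :
    Measure (Fin N → idxM → ℝ) :=
  Measure.pi fun _ : Fin N => sampleLaw D ν σ

instance matrixMeasurableSpace {m n α : Type*} [MeasurableSpace α] :
    MeasurableSpace (Matrix m n α) :=
  (inferInstance : MeasurableSpace (m → n → α))

def minimaxRisk {idxM idxP : Type*} [Fintype idxM] [Fintype idxP] (N : ℕ)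
    (ν : Measure (idxP → ℝ)) (σ : ℝ≥0) (𝒟 : Set (Matrix idxM idxP ℝ)) : ℝ≥0∞ :=
  ⨅ (est : (Fin N → idxM → ℝ) → Matrix idxM idxP ℝ) (_ : Measurable est),
    ⨆ D ∈ 𝒟, ∫⁻ Y, ENNReal.ofReal (frobNormSq (est Y - D)) ∂ obsLaw N D ν σ

/-!
Only one Kronecker factor has to move: the one, say the `k`-th, for which `(m k - 1) * p k` is
largest. Replace each column `d` of that factor by `√(1 - s) • d + √(s / n) • ∑ a, ± W a`, where
`n = m k - 1` and the `W a` form an orthonormal basis of the orthogonal complement of `d`. The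
columns keep unit length for every choice of signs, so this is a cube of dictionaries in the class,
whose `n * p k` edge directions are orthogonal for the Frobenius inner product and which lies in
the ball for small `s`. Assouad's argument then reduces the risk to a sum over the edges of the
errors made in guessing one sign.

For an edge with ends `D` and `D'`, and with `Δ` half their difference, take the law with
dictionary `(D + D') / 2` as the reference. Given the coefficients `x`, the product of the densities
of the two ends is `exp (-‖Δ x‖² / σ²)`, in which the noise has cancelled. Hence the two laws are
hard to distinguish as soon as the second moment of `Δ x` is small, and that moment is at most the
spectral norm of the second moment matrix times `‖Δ‖²`.
-/

section Frobenius

variable {M P : Type*} [Fintype M] [Fintype P]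

/-- The Frobenius inner product `∑ i j, A i j * B i j`, as a bilinear form. -/
def frobInner : LinearMap.BilinForm ℝ (Matrix M P ℝ) :=
  LinearMap.mk₂ ℝ (fun A B => ∑ i, ∑ j, A i j * B i j)
    (fun A A' B => by simp only [Matrix.add_apply, add_mul, Finset.sum_add_distrib])
    (fun c A B => by simp only [Matrix.smul_apply, smul_eq_mul, mul_assoc, Finset.mul_sum])
    (fun A B B' => by simp only [Matrix.add_apply, mul_add, Finset.sum_add_distrib])
    (fun c A B => by simp only [Matrix.smul_apply, smul_eq_mul, mul_left_comm, Finset.mul_sum])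

lemma frobInner_apply (A B : Matrix M P ℝ) : frobInner A B = ∑ i, ∑ j, A i j * B i j := rfl

lemma frobInner_self (A : Matrix M P ℝ) : frobInner A A = frobNormSq A := by
  simp_rw [frobInner_apply, frobNormSq, sq]

lemma frobInner_comm (A B : Matrix M P ℝ) : frobInner A B = frobInner B A := by
  simp_rw [frobInner_apply, mul_comm]

lemma frobNormSq_nonneg (A : Matrix M P ℝ) : 0 ≤ frobNormSq A :=
  Finset.sum_nonneg fun _ _ => Finset.sum_nonneg fun _ _ => sq_nonneg _

lemma frobNormSq_smul (c : ℝ) (A : Matrix M P ℝ) : frobNormSq (c • A) = c ^ 2 * frobNormSq A := by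
  simp_rw [← frobInner_self, map_smul, LinearMap.smul_apply, smul_eq_mul]
  ring

lemma frobNormSq_sub (A B : Matrix M P ℝ) :
    frobNormSq (A - B) = frobNormSq A - 2 * frobInner A B + frobNormSq B := by
  simp only [← frobInner_self, map_sub, LinearMap.sub_apply, frobInner_comm B A]
  ring

lemma measurable_frobInner_left (B : Matrix M P ℝ) : Measurable fun A => frobInner A B := by
  unfold frobInner
  simp only [LinearMap.mk₂_apply]
  have (i : M) (j : P) : Measurable fun A : Matrix M P ℝ => A i j :=
    (measurable_pi_apply j).comp (measurable_pi_apply i)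
  fun_prop

end Frobenius

lemma pi_withDensity {ι : Type*} [Fintype ι] {X : ι → Type*} [∀ i, MeasurableSpace (X i)]
    (μ : ∀ i, Measure (X i)) [∀ i, IsProbabilityMeasure (μ i)] {f : ∀ i, X i → ℝ≥0∞}
    (hf : ∀ i, Measurable (f i)) [∀ i, SigmaFinite ((μ i).withDensity (f i))] :
    Measure.pi (fun i => (μ i).withDensity (f i)) =
      (Measure.pi μ).withDensity fun x => ∏ i, f i (x i) := by
  classical
  refine Measure.pi_eq fun s hs => ?_
  have indicator_prod (x : ∀ i, X i) :
      (Set.univ.pi s).indicator (fun x => ∏ i, f i (x i)) x =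
        ∏ i, (s i).indicator (f i) (x i) := by
    simp only [Set.indicator_apply, Set.mem_univ_pi, Finset.prod_ite_zero, Finset.mem_univ,
      true_implies]
  have hfs i : Measurable ((s i).indicator (f i)) := (hf i).indicator (hs i)
  calc (Measure.pi μ).withDensity (fun x => ∏ i, f i (x i)) (Set.univ.pi s)
    _ = ∫⁻ x, ∏ i, (s i).indicator (f i) (x i) ∂Measure.pi μ := by
        rw [withDensity_apply _ (.univ_pi hs), ← lintegral_indicator (.univ_pi hs)]
        simp_rw [indicator_prod]
    _ = ∏ i, ∫⁻ x, (s i).indicator (f i) (x i) ∂Measure.pi μ :=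
        lintegral_prod_eq_prod_lintegral_of_indepFun Finset.univ
          (fun i (x : ∀ i, X i) => (s i).indicator (f i) (x i))
          (iIndepFun_pi fun i => (hfs i).aemeasurable) fun i => (hfs i).comp (measurable_pi_apply i)
    _ = ∏ i, (μ i).withDensity (f i) (s i) := by
        refine Finset.prod_congr rfl fun i _ => ?_
        rw [(measurePreserving_eval μ i).lintegral_comp (hfs i), lintegral_indicator (hs i),
          withDensity_apply _ (hs i)]

lemma pi_withDensity_ofReal_exp {ι : Type*} [Fintype ι] {X : ι → Type*}
    [∀ i, MeasurableSpace (X i)] (μ : ∀ i, Measure (X i)) [∀ i, IsProbabilityMeasure (μ i)]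
    {f : ∀ i, X i → ℝ} (hf : ∀ i, Measurable (f i)) :
    Measure.pi (fun i => (μ i).withDensity fun x => ENNReal.ofReal (Real.exp (f i x))) =
      (Measure.pi μ).withDensity fun x => ENNReal.ofReal (Real.exp (∑ i, f i (x i))) := by
  have (i : ι) : SigmaFinite ((μ i).withDensity fun x => ENNReal.ofReal (Real.exp (f i x))) :=
    SigmaFinite.withDensity_ofReal _
  rw [pi_withDensity μ fun i => by have := hf i; fun_prop]
  simp_rw [Real.exp_sum, ENNReal.ofReal_prod_of_nonneg fun _ _ => (Real.exp_pos _).le]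

lemma gaussianReal_map_add_eq_withDensity (a : ℝ) {v : ℝ≥0} (hv : v ≠ 0) :
    (gaussianReal 0 v).map (a + ·) = (gaussianReal 0 v).withDensity
      fun x => ENNReal.ofReal (Real.exp (a * (2 * x - a) / (2 * v))) := by
  have hv' : (v : ℝ) ≠ 0 := mod_cast hv
  rw [gaussianReal_map_const_add, zero_add, gaussianReal_of_var_ne_zero _ hv,
    gaussianReal_of_var_ne_zero _ hv,
    ← withDensity_mul _ (measurable_gaussianPDF _ _) (by fun_prop)]
  congr 1 with x
  rw [Pi.mul_apply, gaussianPDF, gaussianPDF, ← ENNReal.ofReal_mul (gaussianPDFReal_nonneg _ _ _),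
    gaussianPDFReal, gaussianPDFReal, mul_assoc (√(2 * π * v))⁻¹, ← Real.exp_add]
  congr 3
  field_simp
  ring

/-- The log-likelihood ratio, at the point `x`, of the Gaussian vectors with covariance `v • 1`
and means `a` and `0`. -/
def gaussianLogRatio {ι : Type*} [Fintype ι] (v : ℝ≥0) (a x : ι → ℝ) : ℝ :=
  ∑ i, a i * (2 * x i - a i) / (2 * v)

@[fun_prop]
lemma measurable_gaussianLogRatio {ι Ω : Type*} [Fintype ι] [MeasurableSpace Ω] (v : ℝ≥0)
    {a x : Ω → ι → ℝ} (ha : Measurable a) (hx : Measurable x) :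
    Measurable fun z => gaussianLogRatio v (a z) (x z) := by
  unfold gaussianLogRatio
  fun_prop

lemma gaussianLogRatio_add_gaussianLogRatio_neg {ι : Type*} [Fintype ι] (v : ℝ≥0) (a x : ι → ℝ) :
    gaussianLogRatio v a x + gaussianLogRatio v (-a) x = -(∑ i, a i ^ 2) / v := by
  rw [gaussianLogRatio, gaussianLogRatio, ← Finset.sum_add_distrib, neg_div, Finset.sum_div,
    ← Finset.sum_neg_distrib]
  refine Finset.sum_congr rfl fun i _ => ?_
  rw [Pi.neg_apply]
  ring

lemma map_add_pi_gaussianReal {ι : Type*} [Fintype ι] (a : ι → ℝ) {v : ℝ≥0} (hv : v ≠ 0) :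
    (Measure.pi fun _ : ι => gaussianReal 0 v).map (a + ·) =
      (Measure.pi fun _ : ι => gaussianReal 0 v).withDensity
        fun x => ENNReal.ofReal (Real.exp (gaussianLogRatio v a x)) := by
  have (i : ι) : SigmaFinite ((gaussianReal 0 v).map (a i + ·)) := by
    rw [gaussianReal_map_const_add]; infer_instance
  calc (Measure.pi fun _ : ι => gaussianReal 0 v).map (a + ·)
    _ = Measure.pi fun i => (gaussianReal 0 v).map (a i + ·) :=
        Measure.pi_map_pi fun i => (measurable_const_add (a i)).aemeasurable
    _ = _ := by
        simp_rw [gaussianReal_map_add_eq_withDensity _ hv, gaussianLogRatio]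
        exact pi_withDensity_ofReal_exp (fun _ => gaussianReal 0 v) (fun i => by fun_prop)

@[fun_prop]
lemma measurable_mulVec {M P Ω : Type*} [Finite M] [Fintype P] [MeasurableSpace Ω]
    (D : Matrix M P ℝ) {x : Ω → P → ℝ} (hx : Measurable x) : Measurable fun z => D *ᵥ x z :=
  (continuous_const.matrix_mulVec continuous_id).measurable.comp hx

section ObservationLaw

variable {M P : Type*} [Fintype M] [Fintype P]

/-- The joint law of a coefficient vector with law `ν` and of an independent centred Gaussian noise
vector with covariance `σ ^ 2 • 1`. -/
abbrev coeffNoiseLaw (M : Type*) [Fintype M] (ν : Measure (P → ℝ)) (σ : ℝ≥0) :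
    Measure ((P → ℝ) × (M → ℝ)) :=
  ν.prod (Measure.pi fun _ : M => gaussianReal 0 (σ ^ 2))

lemma sampleLaw_eq_map_withDensity (C D : Matrix M P ℝ) (ν : Measure (P → ℝ)) {σ : ℝ≥0}
    (hσ : σ ≠ 0) :
    sampleLaw D ν σ =
      ((coeffNoiseLaw M ν σ).withDensity fun z =>
        ENNReal.ofReal (Real.exp (gaussianLogRatio (σ ^ 2) ((D - C) *ᵥ z.1) z.2))).map
          fun z => C *ᵥ z.1 + z.2 := by
  refine Measure.ext_of_lintegral _ fun F hF => ?_
  rw [sampleLaw, lintegral_map hF (by fun_prop), lintegral_map hF (by fun_prop),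
    lintegral_withDensity_eq_lintegral_mul _ (by fun_prop) (by fun_prop),
    lintegral_prod _ (by fun_prop), lintegral_prod _ (by fun_prop)]
  refine lintegral_congr fun x => ?_
  have hFC : Measurable fun e => F (C *ᵥ x + e) := by fun_prop
  have shift (e : M → ℝ) : D *ᵥ x + e = C *ᵥ x + ((D - C) *ᵥ x + e) := by
    rw [sub_mulVec]; abel
  simp_rw [shift]
  rw [← lintegral_map hFC (by fun_prop : Measurable fun e => (D - C) *ᵥ x + e),
    map_add_pi_gaussianReal _ (pow_ne_zero 2 hσ),
    lintegral_withDensity_eq_lintegral_mul _ (by fun_prop) hFC]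
  rfl

variable (ν : Measure (P → ℝ)) [IsProbabilityMeasure ν]

instance isProbabilityMeasure_sampleLaw (D : Matrix M P ℝ) (σ : ℝ≥0) :
    IsProbabilityMeasure (sampleLaw D ν σ) :=
  Measure.isProbabilityMeasure_map (by fun_prop)

instance isProbabilityMeasure_obsLaw (N : ℕ) (D : Matrix M P ℝ) (σ : ℝ≥0) :
    IsProbabilityMeasure (obsLaw N D ν σ) := by
  unfold obsLaw
  infer_instance

lemma obsLaw_eq_map_withDensity (N : ℕ) (C D : Matrix M P ℝ) {σ : ℝ≥0} (hσ : σ ≠ 0) :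
    obsLaw N D ν σ =
      ((Measure.pi fun _ : Fin N => coeffNoiseLaw M ν σ).withDensity fun z => ENNReal.ofReal
        (Real.exp (∑ n, gaussianLogRatio (σ ^ 2) ((D - C) *ᵥ (z n).1) (z n).2))).map
          fun z n => C *ᵥ (z n).1 + (z n).2 := by
  set ρ := (coeffNoiseLaw M ν σ).withDensity fun z =>
    ENNReal.ofReal (Real.exp (gaussianLogRatio (σ ^ 2) ((D - C) *ᵥ z.1) z.2))
  have hsample : sampleLaw D ν σ = ρ.map fun z => C *ᵥ z.1 + z.2 :=
    sampleLaw_eq_map_withDensity C D ν hσ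
  have : SigmaFinite ρ := SigmaFinite.withDensity_ofReal _
  have : SigmaFinite (ρ.map fun z => C *ᵥ z.1 + z.2) := hsample ▸ inferInstance
  calc obsLaw N D ν σ
    _ = Measure.pi fun _ : Fin N => ρ.map fun z => C *ᵥ z.1 + z.2 := by rw [obsLaw, hsample]
    _ = (Measure.pi fun _ : Fin N => ρ).map fun z n => C *ᵥ (z n).1 + (z n).2 :=
        (Measure.pi_map_pi fun _ => by fun_prop).symm
    _ = _ := by
        rw [pi_withDensity_ofReal_exp (fun _ : Fin N => coeffNoiseLaw M ν σ) fun _ => by fun_prop]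

end ObservationLaw

lemma four_mul_exp_half_add_le (x y w : ℝ) {ε : ℝ} (hε : ε ^ 2 = 1) :
    4 * Real.exp ((x + y) / 2) ≤
      Real.exp x * (w - ε) ^ 2 + Real.exp y * (w + ε) ^ 2 + (Real.exp x + Real.exp y) := by
  set p := Real.exp (x / 2)
  set q := Real.exp (y / 2)
  have hx : Real.exp x = p ^ 2 := by rw [← Real.exp_nat_mul]; congr 1; push_cast; ring
  have hy : Real.exp y = q ^ 2 := by rw [← Real.exp_nat_mul]; congr 1; push_cast; ring
  have hxy : Real.exp ((x + y) / 2) = p * q := by rw [← Real.exp_add]; congr 1; ring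
  have sum_of_squares : p ^ 2 * (w - ε) ^ 2 + q ^ 2 * (w + ε) ^ 2 + (p ^ 2 + q ^ 2) - 4 * (p * q) =
      (w * p - ε * (p - q)) ^ 2 + (w * q - ε * (p - q)) ^ 2 := by
    linear_combination (4 * p * q - p ^ 2 - q ^ 2) * hε
  rw [hx, hy, hxy]
  nlinarith only [sum_of_squares, sq_nonneg (w * p - ε * (p - q)),
    sq_nonneg (w * q - ε * (p - q))]

lemma four_le_lintegral_two_point {Ω Ω' : Type*} [MeasurableSpace Ω] [MeasurableSpace Ω']
    {μ : Measure Ω} [IsProbabilityMeasure μ] {P Q : Measure Ω'} [IsProbabilityMeasure P]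
    [IsProbabilityMeasure Q] {φ : Ω → Ω'} (hφ : Measurable φ) {f g : Ω → ℝ} (hf : Measurable f)
    (hg : Measurable g)
    (hP : P = (μ.withDensity fun z => ENNReal.ofReal (Real.exp (f z))).map φ)
    (hQ : Q = (μ.withDensity fun z => ENNReal.ofReal (Real.exp (g z))).map φ)
    {w : Ω' → ℝ} (hw : Measurable w) {ε : ℝ} (hε : ε ^ 2 = 1) :
    4 ≤ ∫⁻ y, ENNReal.ofReal ((w y - ε) ^ 2) ∂P + ∫⁻ y, ENNReal.ofReal ((w y + ε) ^ 2) ∂Q + 2 +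
      ∫⁻ z, ENNReal.ofReal (-2 * (f z + g z)) ∂μ := by
  have lintegral_density {ρ : Measure Ω'} {h : Ω → ℝ} (hh : Measurable h)
      (hρ : ρ = (μ.withDensity fun z => ENNReal.ofReal (Real.exp (h z))).map φ)
      {F : Ω' → ℝ≥0∞} (hF : Measurable F) :
      ∫⁻ y, F y ∂ρ = ∫⁻ z, ENNReal.ofReal (Real.exp (h z)) * F (φ z) ∂μ := by
    rw [hρ, lintegral_map hF hφ,
      lintegral_withDensity_eq_lintegral_mul _ (by fun_prop) (by fun_prop)]
    rfl
  have two_eq : (2 : ℝ≥0∞) = ∫⁻ z, ENNReal.ofReal (Real.exp (f z)) ∂μ +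
      ∫⁻ z, ENNReal.ofReal (Real.exp (g z)) ∂μ := by
    have hP1 := lintegral_density hf hP (F := fun _ => 1) (by fun_prop)
    have hQ1 := lintegral_density hg hQ (F := fun _ => 1) (by fun_prop)
    simp only [lintegral_const, measure_univ, mul_one] at hP1 hQ1
    rw [← hP1, ← hQ1, one_add_one_eq_two]
  rw [lintegral_density hf hP (by fun_prop), lintegral_density hg hQ (by fun_prop), two_eq,
    ← lintegral_add_left (by fun_prop), ← lintegral_add_left (by fun_prop),
    ← lintegral_add_left (by fun_prop), ← lintegral_add_left (by fun_prop)]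
  calc (4 : ℝ≥0∞) = ∫⁻ _, ENNReal.ofReal 4 ∂μ := by simp
    _ ≤ _ := lintegral_mono fun z => ?_
  rw [← ENNReal.ofReal_mul (Real.exp_pos _).le, ← ENNReal.ofReal_mul (Real.exp_pos _).le,
    ← ENNReal.ofReal_add (by positivity) (by positivity),
    ← ENNReal.ofReal_add (by positivity) (by positivity),
    ← ENNReal.ofReal_add (by positivity) (by positivity)]
  refine le_trans (ENNReal.ofReal_le_ofReal ?_) ENNReal.ofReal_add_le
  linarith [four_mul_exp_half_add_le (f z) (g z) (w (φ z)) hε,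
    Real.add_one_le_exp ((f z + g z) / 2)]

section SecondMoment

variable {M P : Type*} [Fintype M] [Fintype P]

lemma specNorm_nonneg [DecidableEq P] (A : Matrix M P ℝ) : 0 ≤ specNorm A := norm_nonneg _

lemma dotProduct_mulVec_le_specNorm_mul [DecidableEq P] (S : Matrix P P ℝ) (x : P → ℝ) :
    x ⬝ᵥ S *ᵥ x ≤ specNorm S * ∑ i, x i ^ 2 := by
  set e : EuclideanSpace ℝ P := WithLp.toLp 2 x
  have hS : ‖S.toEuclideanLin e‖ ≤ specNorm S * ‖e‖ :=
    (LinearMap.toContinuousLinearMap S.toEuclideanLin).le_opNorm e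
  calc x ⬝ᵥ S *ᵥ x = inner ℝ e (S.toEuclideanLin e) := by
        simp [e, EuclideanSpace.inner_eq_star_dotProduct, dotProduct_comm]
    _ ≤ ‖e‖ * (specNorm S * ‖e‖) :=
        (real_inner_le_norm _ _).trans (mul_le_mul_of_nonneg_left hS (norm_nonneg e))
    _ = specNorm S * ∑ i, x i ^ 2 := by
        rw [← EuclideanSpace.real_norm_sq_eq e]; ring

lemma lintegral_sum_sq_mulVec_le [DecidableEq P] {ν : Measure (P → ℝ)} {S : Matrix P P ℝ}
    (hint : ∀ i j, Integrable (fun x => x i * x j) ν) (hS : ∀ i j, ∫ x, x i * x j ∂ν = S i j)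
    (E : Matrix M P ℝ) :
    ∫⁻ x, ENNReal.ofReal (∑ i, (E *ᵥ x) i ^ 2) ∂ν ≤
      ENNReal.ofReal (specNorm S * frobNormSq E) := by
  have expand (x : P → ℝ) :
      ∑ i, (E *ᵥ x) i ^ 2 = ∑ i, ∑ j, ∑ k, E i j * E i k * (x j * x k) := by
    refine Finset.sum_congr rfl fun i _ => ?_
    rw [mulVec, dotProduct, sq, Finset.sum_mul_sum]
    exact Finset.sum_congr rfl fun j _ => Finset.sum_congr rfl fun k _ => by ring
  have hterm i j k : Integrable (fun x => E i j * E i k * (x j * x k)) ν :=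
    (hint j k).const_mul _
  have hrow i j : Integrable (fun x => ∑ k, E i j * E i k * (x j * x k)) ν :=
    integrable_finsetSum _ fun k _ => hterm i j k
  have hmat i : Integrable (fun x => ∑ j, ∑ k, E i j * E i k * (x j * x k)) ν :=
    integrable_finsetSum _ fun j _ => hrow i j
  have second_moment : ∫ x, ∑ i, (E *ᵥ x) i ^ 2 ∂ν = ∑ i, E i ⬝ᵥ S *ᵥ E i := by
    simp_rw [expand, integral_finsetSum _ fun i _ => hmat i,
      integral_finsetSum _ fun j _ => hrow _ j, integral_finsetSum _ fun k _ => hterm _ _ k,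
      integral_const_mul, hS, dotProduct, mulVec, dotProduct, Finset.mul_sum]
    refine Finset.sum_congr rfl fun i _ => Finset.sum_congr rfl fun j _ =>
      Finset.sum_congr rfl fun k _ => by ring
  have hintegrable : Integrable (fun x => ∑ i, (E *ᵥ x) i ^ 2) ν := by
    simp_rw [expand]
    exact integrable_finsetSum _ fun i _ => hmat i
  rw [← ofReal_integral_eq_lintegral_ofReal hintegrable
    (.of_forall fun x => Finset.sum_nonneg fun i _ => sq_nonneg _), second_moment, frobNormSq,
    Finset.mul_sum]
  exact ENNReal.ofReal_le_ofReal
    (Finset.sum_le_sum fun i _ => dotProduct_mulVec_le_specNorm_mul S (E i))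

end SecondMoment

lemma lintegral_pi_sum_eval {ι Ω : Type*} [Fintype ι] [MeasurableSpace Ω] (μ : Measure Ω)
    [IsProbabilityMeasure μ] {f : Ω → ℝ≥0∞} (hf : Measurable f) :
    ∫⁻ z, ∑ i, f (z i) ∂Measure.pi (fun _ : ι => μ) = Fintype.card ι * ∫⁻ x, f x ∂μ := by
  rw [lintegral_finsetSum _ fun i _ => (by fun_prop : Measurable fun z : ι → Ω => f (z i))]
  simp_rw [(measurePreserving_eval (fun _ : ι => μ) _).lintegral_comp hf]
  rw [Finset.sum_const, Finset.card_univ, nsmul_eq_mul]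

section TwoDictionaries

variable {M P : Type*} [Fintype M] [Fintype P] [DecidableEq P] {ν : Measure (P → ℝ)}
  [IsProbabilityMeasure ν] {S : Matrix P P ℝ}

lemma lintegral_sum_gaussianLogRatio_le
    (hint : ∀ i j, Integrable (fun x => x i * x j) ν) (hS : ∀ i j, ∫ x, x i * x j ∂ν = S i j)
    (N : ℕ) (E : Matrix M P ℝ) (σ : ℝ≥0) :
    ∫⁻ z, ENNReal.ofReal (-2 * (∑ n, gaussianLogRatio (σ ^ 2) (E *ᵥ (z n).1) (z n).2 +
        ∑ n, gaussianLogRatio (σ ^ 2) (-E *ᵥ (z n).1) (z n).2))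
        ∂Measure.pi (fun _ : Fin N => coeffNoiseLaw M ν σ) ≤
      ENNReal.ofReal (2 * N * specNorm S * frobNormSq E / σ ^ 2) := by
  have hsum (z : Fin N → (P → ℝ) × (M → ℝ)) :
      -2 * (∑ n, gaussianLogRatio (σ ^ 2) (E *ᵥ (z n).1) (z n).2 +
        ∑ n, gaussianLogRatio (σ ^ 2) (-E *ᵥ (z n).1) (z n).2) =
      ∑ n, 2 / (σ : ℝ) ^ 2 * ∑ i, (E *ᵥ (z n).1) i ^ 2 := by
    rw [← Finset.sum_add_distrib, Finset.mul_sum]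
    refine Finset.sum_congr rfl fun n _ => ?_
    rw [neg_mulVec, gaussianLogRatio_add_gaussianLogRatio_neg, NNReal.coe_pow]
    ring
  have hnonneg (x : P → ℝ) : 0 ≤ 2 / (σ : ℝ) ^ 2 * ∑ i, (E *ᵥ x) i ^ 2 := by positivity
  have hmeas : Measurable fun x : P → ℝ => ENNReal.ofReal (∑ i, (E *ᵥ x) i ^ 2) := by fun_prop
  simp_rw [hsum, ENNReal.ofReal_sum_of_nonneg fun _ _ => hnonneg _]
  rw [lintegral_pi_sum_eval (coeffNoiseLaw M ν σ) (by fun_prop :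
      Measurable fun z => ENNReal.ofReal (2 / (σ : ℝ) ^ 2 * ∑ i, (E *ᵥ z.1) i ^ 2))]
  simp_rw [ENNReal.ofReal_mul (by positivity : 0 ≤ 2 / (σ : ℝ) ^ 2)]
  rw [lintegral_const_mul _ (by fun_prop), measurePreserving_fst.lintegral_comp hmeas,
    Fintype.card_fin]
  calc (N : ℝ≥0∞) * (ENNReal.ofReal (2 / (σ : ℝ) ^ 2) * ∫⁻ x, _ ∂ν)
    _ ≤ N * (ENNReal.ofReal (2 / (σ : ℝ) ^ 2) * ENNReal.ofReal (specNorm S * frobNormSq E)) := by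
        gcongr
        exact lintegral_sum_sq_mulVec_le hint hS E
    _ = ENNReal.ofReal (2 * N * specNorm S * frobNormSq E / σ ^ 2) := by
        rw [← ENNReal.ofReal_natCast, ← ENNReal.ofReal_mul (by positivity),
          ← ENNReal.ofReal_mul (by positivity)]
        congr 1
        ring

lemma one_le_lintegral_sq_sub_add_lintegral_sq_add
    (hint : ∀ i j, Integrable (fun x => x i * x j) ν) (hS : ∀ i j, ∫ x, x i * x j ∂ν = S i j)
    {N : ℕ} {σ : ℝ≥0} (hσ : σ ≠ 0) {D D' : Matrix M P ℝ}
    (hclose : N * specNorm S * frobNormSq (D - D') ≤ 2 * σ ^ 2)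
    {w : (Fin N → M → ℝ) → ℝ} (hw : Measurable w) {ε : ℝ} (hε : ε ^ 2 = 1) :
    1 ≤ ∫⁻ Y, ENNReal.ofReal ((w Y - ε) ^ 2) ∂obsLaw N D ν σ +
      ∫⁻ Y, ENNReal.ofReal ((w Y + ε) ^ 2) ∂obsLaw N D' ν σ := by
  set C : Matrix M P ℝ := (2⁻¹ : ℝ) • (D + D')
  set E : Matrix M P ℝ := (2⁻¹ : ℝ) • (D - D')
  have hDC : D - C = E := by simp only [C, E]; module
  have hDC' : D' - C = -E := by simp only [C, E]; module
  have four_le := four_le_lintegral_two_point (by fun_prop) (by fun_prop) (by fun_prop)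
    (obsLaw_eq_map_withDensity ν N C D hσ) (obsLaw_eq_map_withDensity ν N C D' hσ) hw hε
  rw [hDC, hDC'] at four_le
  have hsmall : 2 * N * specNorm S * frobNormSq E / σ ^ 2 ≤ 1 := by
    rw [frobNormSq_smul]
    refine div_le_one_of_le₀ ?_ (by positivity)
    linarith
  have log_ratio_le := (lintegral_sum_gaussianLogRatio_le hint hS N E σ).trans
    (ENNReal.ofReal_le_one.2 hsmall)
  refine (ENNReal.add_le_add_iff_right (by simp : (3 : ℝ≥0∞) ≠ ∞)).1 ?_
  calc (1 : ℝ≥0∞) + 3 = 4 := by norm_num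
    _ ≤ _ := four_le
    _ ≤ _ + 2 + 1 := by gcongr
    _ = _ + 3 := by rw [add_assoc, two_add_one_eq_three]

end TwoDictionaries

section CubeVertex

variable {M P J : Type*} [Fintype J]

/-- The vertex of the cube with centre `A` and half-edges `B j` selected by the signs `u`. -/
def cubeVertex (A : Matrix M P ℝ) (B : J → Matrix M P ℝ) (u : J → ℤˣ) : Matrix M P ℝ :=
  A + ∑ j, ((u j : ℤ) : ℝ) • B j

lemma map_cubeVertex {M' P' : Type*} (f : Matrix M P ℝ →ₗ[ℝ] Matrix M' P' ℝ)
    (A : Matrix M P ℝ) (B : J → Matrix M P ℝ) (u : J → ℤˣ) :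
    f (cubeVertex A B u) = cubeVertex (f A) (fun j => f (B j)) u := by
  simp only [cubeVertex, map_add, map_sum, map_smul]

end CubeVertex

section SignCube

variable {J : Type*} [DecidableEq J]

lemma intUnits_cast_sq (ε : ℤˣ) : ((ε : ℤ) : ℝ) ^ 2 = 1 := by
  rcases Int.units_eq_one_or ε with rfl | rfl <;> simp

/-- The neighbour of the sign pattern `u` on the discrete cube in the `j`-th direction. -/
def flipSign (j : J) (u : J → ℤˣ) : J → ℤˣ := Function.update u j (-u j)

lemma flipSign_involutive (j : J) : Function.Involutive (flipSign j) := fun u => by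
  simp only [flipSign, Function.update_self, Function.update_idem, neg_neg,
    Function.update_eq_self]

variable [Fintype J]

lemma card_mul_le_two_mul_of_flipSign {T : J → (J → ℤˣ) → ℝ≥0∞} {β R : ℝ≥0∞}
    (hβ : ∀ j u, β ≤ T j u + T j (flipSign j u)) (hR : ∀ u, ∑ j, T j u ≤ R) :
    Fintype.card J * β ≤ 2 * R := by
  set c := (Fintype.card (J → ℤˣ) : ℝ≥0∞)
  have flip_sum (j : J) : c * β ≤ 2 * ∑ u, T j u :=
    calc c * β = ∑ _u : J → ℤˣ, β := by rw [Finset.sum_const, Finset.card_univ, nsmul_eq_mul]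
      _ ≤ ∑ u, (T j u + T j (flipSign j u)) := Finset.sum_le_sum fun u _ => hβ j u
      _ = 2 * ∑ u, T j u := by
          rw [Finset.sum_add_distrib, two_mul]
          exact congrArg _ (Equiv.sum_comp (flipSign_involutive j).toPerm (T j))
  have hc : c ≠ 0 := by simp [c]
  refine (ENNReal.mul_le_mul_iff_right hc (by simp [c])).1 ?_
  calc c * (Fintype.card J * β) = ∑ _j : J, c * β := by
        rw [Finset.sum_const, Finset.card_univ, nsmul_eq_mul, mul_left_comm]
    _ ≤ ∑ j, 2 * ∑ u, T j u := Finset.sum_le_sum fun j _ => flip_sum j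
    _ = 2 * ∑ u, ∑ j, T j u := by rw [← Finset.mul_sum, Finset.sum_comm]
    _ ≤ 2 * ∑ _u : J → ℤˣ, R := by gcongr with u; exact hR u
    _ = c * (2 * R) := by rw [Finset.sum_const, Finset.card_univ, nsmul_eq_mul, mul_left_comm]

variable {M P : Type*}

lemma cubeVertex_sub_flipSign (A : Matrix M P ℝ) (B : J → Matrix M P ℝ) (u : J → ℤˣ) (j : J) :
    cubeVertex A B u - cubeVertex A B (flipSign j u) = (2 * ((u j : ℤ) : ℝ)) • B j := by
  rw [cubeVertex, cubeVertex, add_sub_add_left_eq_sub, ← Finset.sum_sub_distrib,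
    Finset.sum_eq_single j]
  · rw [flipSign, Function.update_self, Units.val_neg]
    push_cast
    module
  · intro i _ hij
    rw [flipSign, Function.update_of_ne hij, sub_self]
  · simp

end SignCube

section Assouad

variable {M P J : Type*} [Fintype M] [Fintype P] [Fintype J] [DecidableEq J]

lemma sum_frobInner_sq_le {B : J → Matrix M P ℝ} {b : ℝ} (hb : 0 < b)
    (hB : ∀ i j, frobInner (B i) (B j) = if i = j then b else 0) (H : Matrix M P ℝ) :
    ∑ j, frobInner H (B j) ^ 2 ≤ b * frobNormSq H := by
  set proj : Matrix M P ℝ := ∑ j, frobInner H (B j) • B j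
  have inner_proj : frobInner H proj = ∑ j, frobInner H (B j) ^ 2 := by
    simp only [proj, map_sum, map_smul, smul_eq_mul, sq]
  have normSq_proj : frobNormSq proj = b * ∑ j, frobInner H (B j) ^ 2 := by
    simp only [← frobInner_self, proj, map_sum, map_smul, LinearMap.sum_apply,
      LinearMap.smul_apply, hB, smul_eq_mul, mul_ite, mul_zero, Finset.sum_ite_eq',
      Finset.mem_univ, if_true, Finset.mul_sum]
    exact Finset.sum_congr rfl fun j _ => by ring
  have normSq_residual : frobNormSq (b • H - proj) =
      b * (b * frobNormSq H - ∑ j, frobInner H (B j) ^ 2) := by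
    rw [frobNormSq_sub, frobNormSq_smul, map_smul, LinearMap.smul_apply, inner_proj, normSq_proj,
      smul_eq_mul]
    ring
  have := nonneg_of_mul_nonneg_right (normSq_residual ▸ frobNormSq_nonneg _) hb
  linarith

lemma mul_sum_sq_sub_le_frobNormSq_sub_cubeVertex {B : J → Matrix M P ℝ} {b : ℝ} (hb : 0 < b)
    (hB : ∀ i j, frobInner (B i) (B j) = if i = j then b else 0) (A G : Matrix M P ℝ)
    (u : J → ℤˣ) :
    b * ∑ j, (frobInner (G - A) (B j) / b - (u j : ℤ)) ^ 2 ≤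
      frobNormSq (G - cubeVertex A B u) := by
  have coeff (j : J) : frobInner (G - cubeVertex A B u) (B j) =
      b * (frobInner (G - A) (B j) / b - (u j : ℤ)) := by
    simp only [cubeVertex, ← sub_sub, map_sub (frobInner (M := M) (P := P)) (G - A), map_sum,
      map_smul, LinearMap.sub_apply, LinearMap.sum_apply, LinearMap.smul_apply, hB, smul_eq_mul,
      mul_ite, mul_zero, Finset.sum_ite_eq', Finset.mem_univ, if_true]
    field_simp
  have bessel := sum_frobInner_sq_le hb hB (G - cubeVertex A B u)
  simp only [coeff, mul_pow, ← Finset.mul_sum, sq b, mul_assoc] at bessel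
  exact le_of_mul_le_mul_left bessel hb

lemma card_mul_le_two_mul_minimaxRisk [DecidableEq P] {ν : Measure (P → ℝ)}
    [IsProbabilityMeasure ν] {S : Matrix P P ℝ}
    (hint : ∀ i j, Integrable (fun x => x i * x j) ν) (hS : ∀ i j, ∫ x, x i * x j ∂ν = S i j)
    {N : ℕ} {σ : ℝ≥0} (hσ : σ ≠ 0) {A : Matrix M P ℝ} {B : J → Matrix M P ℝ} {b : ℝ} (hb : 0 < b)
    (hB : ∀ i j, frobInner (B i) (B j) = if i = j then b else 0)
    (hclose : N * specNorm S * (2 * b) ≤ σ ^ 2) {𝒟 : Set (Matrix M P ℝ)}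
    (h𝒟 : ∀ u, cubeVertex A B u ∈ 𝒟) :
    Fintype.card J * ENNReal.ofReal b ≤ 2 * minimaxRisk N ν σ 𝒟 := by
  rw [_root_.minimaxRisk, ENNReal.mul_iInf_of_ne (by simp) (by simp)]
  refine le_iInf fun est => ?_
  rw [ENNReal.mul_iInf_of_ne (by simp) (by simp)]
  refine le_iInf fun hest => ?_
  set w : J → (Fin N → M → ℝ) → ℝ := fun j Y => frobInner (est Y - A) (B j) / b
  have hw (j : J) : Measurable (w j) := by
    have := (measurable_frobInner_left (B j)).comp hest
    simp only [w, map_sub, LinearMap.sub_apply]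
    fun_prop
  set err : J → (J → ℤˣ) → ℝ≥0∞ := fun j u => ∫⁻ Y, ENNReal.ofReal b *
    ENNReal.ofReal ((w j Y - (u j : ℤ)) ^ 2) ∂obsLaw N (cubeVertex A B u) ν σ
  refine card_mul_le_two_mul_of_flipSign (T := err) (fun j u => ?_) fun u => ?_
  · have close : N * specNorm S *
        frobNormSq (cubeVertex A B u - cubeVertex A B (flipSign j u)) ≤ 2 * σ ^ 2 := by
      rw [cubeVertex_sub_flipSign, frobNormSq_smul, mul_pow, intUnits_cast_sq, ← frobInner_self,
        hB, if_pos rfl]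
      linarith
    have two_point := one_le_lintegral_sq_sub_add_lintegral_sq_add hint hS hσ close (hw j)
      (intUnits_cast_sq (u j))
    simp only [err]
    rw [lintegral_const_mul _ (by fun_prop), lintegral_const_mul _ (by fun_prop), ← mul_add]
    refine le_mul_of_one_le_right' (two_point.trans_eq ?_)
    simp only [flipSign, Function.update_self, Units.val_neg, Int.cast_neg, sub_neg_eq_add]
  · refine le_trans ?_ (le_iSup₂ (cubeVertex A B u) (h𝒟 u))
    simp only [err]
    rw [← lintegral_finsetSum _ fun j _ => by fun_prop]
    refine lintegral_mono fun Y => ?_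
    rw [← Finset.mul_sum, ← ENNReal.ofReal_sum_of_nonneg fun _ _ => sq_nonneg _,
      ← ENNReal.ofReal_mul hb.le]
    exact ENNReal.ofReal_le_ofReal
      (mul_sum_sq_sub_le_frobNormSq_sub_cubeVertex hb hB A (est Y) u)

end Assouad

section OrthonormalVectors

variable {M : Type*} [Fintype M]

lemma exists_orthonormal_dotProduct_eq_zero {n : ℕ} (hn : Fintype.card M = n + 1) {d : M → ℝ}
    (hd : d ≠ 0) :
    ∃ W : Fin n → M → ℝ, (∀ a a', W a ⬝ᵥ W a' = if a = a' then 1 else 0) ∧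
      ∀ a, d ⬝ᵥ W a = 0 := by
  have : Fact (Module.finrank ℝ (EuclideanSpace ℝ M) = n + 1) :=
    ⟨by rw [finrank_euclideanSpace, hn]⟩
  have he : WithLp.toLp 2 d ≠ 0 := by simpa using hd
  set V := OrthonormalBasis.fromOrthogonalSpanSingleton (𝕜 := ℝ) n he
  refine ⟨fun a => WithLp.ofLp (V a : EuclideanSpace ℝ M), fun a a' => ?_, fun a => ?_⟩
  · rw [← orthonormal_iff_ite.1 V.orthonormal a a', Submodule.coe_inner,
      EuclideanSpace.inner_eq_star_dotProduct, dotProduct_comm, star_trivial]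
  · have orthogonal := Submodule.mem_orthogonal_singleton_iff_inner_right.1 (V a).2
    rwa [EuclideanSpace.inner_eq_star_dotProduct, dotProduct_comm, star_trivial] at orthogonal

lemma dotProduct_self_smul_add_smul_sum {ι : Type*} [Fintype ι] [DecidableEq ι] {d : M → ℝ}
    (hd : d ⬝ᵥ d = 1) {W : ι → M → ℝ} (hW : ∀ a a', W a ⬝ᵥ W a' = if a = a' then 1 else 0)
    (hdW : ∀ a, d ⬝ᵥ W a = 0) {ε : ι → ℝ} (hε : ∀ a, ε a ^ 2 = 1) (α τ : ℝ) :
    (α • d + τ • ∑ a, ε a • W a) ⬝ᵥ (α • d + τ • ∑ a, ε a • W a) =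
      α ^ 2 + τ ^ 2 * Fintype.card ι := by
  have hdsum : d ⬝ᵥ ∑ a, ε a • W a = 0 := by
    simp only [dotProduct_sum, dotProduct_smul, hdW, smul_zero, Finset.sum_const_zero]
  have hsum : (∑ a, ε a • W a) ⬝ᵥ ∑ a, ε a • W a = Fintype.card ι := by
    simp only [sum_dotProduct, dotProduct_sum, smul_dotProduct, dotProduct_smul, hW, smul_eq_mul,
      mul_ite, mul_one, mul_zero, Finset.sum_ite_eq', Finset.mem_univ, if_true, ← sq, hε,
      Finset.sum_const, Finset.card_univ, nsmul_eq_mul]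
  simp only [add_dotProduct, dotProduct_add, smul_dotProduct, dotProduct_smul, hd, hdsum, hsum,
    dotProduct_comm _ d, smul_eq_mul]
  ring

end OrthonormalVectors

section ColumnPerturbation

variable {M P ι : Type*} [DecidableEq P]

/-- The matrix whose only nonzero column is the `q.2`-th one, equal to `τ • W q.2 q.1`: the
perturbation of the `q.2`-th column of a dictionary in its `q.1`-th admissible direction. -/
def columnPerturbation (τ : ℝ) (W : P → ι → M → ℝ) (q : ι × P) : Matrix M P ℝ :=
  τ • vecMulVec (W q.2 q.1) (Pi.single q.2 1)

lemma col_cubeVertex_columnPerturbation [Fintype P] [Fintype ι] (A : Matrix M P ℝ) (τ : ℝ)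
    (W : P → ι → M → ℝ) (u : ι × P → ℤˣ) (y : P) :
    (cubeVertex A (columnPerturbation τ W) u).col y =
      A.col y + τ • ∑ a, ((u (a, y) : ℤ) : ℝ) • W y a := by
  ext x
  simp only [cubeVertex, columnPerturbation, col_apply, Matrix.add_apply, Matrix.sum_apply,
    Matrix.smul_apply, vecMulVec_apply, Fintype.sum_prod_type, smul_eq_mul, Pi.add_apply,
    Pi.smul_apply, Finset.sum_apply, Finset.mul_sum, Pi.single_apply, mul_ite, mul_one, mul_zero,
    Finset.sum_ite_eq, Finset.mem_univ, if_true, mul_left_comm]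

end ColumnPerturbation

section UnitColumns

variable {M P ι : Type*} [Fintype M]

lemma hasUnitColumns_iff_dotProduct_col {A : Matrix M P ℝ} :
    hasUnitColumns A ↔ ∀ y, A.col y ⬝ᵥ A.col y = 1 := by
  simp only [hasUnitColumns, dotProduct, col_apply, sq]

lemma frobNormSq_eq_sum_dotProduct_col [Fintype P] (A : Matrix M P ℝ) :
    frobNormSq A = ∑ y, A.col y ⬝ᵥ A.col y := by
  simp only [frobNormSq, dotProduct, col_apply, sq]
  exact Finset.sum_comm

lemma frobNormSq_of_hasUnitColumns [Fintype P] {A : Matrix M P ℝ} (hA : hasUnitColumns A) :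
    frobNormSq A = Fintype.card P := by
  simp only [frobNormSq_eq_sum_dotProduct_col, hasUnitColumns_iff_dotProduct_col.1 hA,
    Finset.sum_const, Finset.card_univ, nsmul_eq_mul, mul_one]

lemma frobInner_vecMulVec [Fintype P] (v v' : M → ℝ) (w w' : P → ℝ) :
    frobInner (vecMulVec v w) (vecMulVec v' w') = (v ⬝ᵥ v') * (w ⬝ᵥ w') := by
  simp only [frobInner_apply, vecMulVec_apply, dotProduct, Finset.sum_mul_sum]
  exact Finset.sum_congr rfl fun i _ => Finset.sum_congr rfl fun j _ => by ring

variable [DecidableEq P]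

lemma frobInner_columnPerturbation [Fintype P] [DecidableEq ι] {W : P → ι → M → ℝ}
    (hW : ∀ y a a', W y a ⬝ᵥ W y a' = if a = a' then 1 else 0) (τ : ℝ) (q q' : ι × P) :
    frobInner (columnPerturbation τ W q) (columnPerturbation τ W q') =
      if q = q' then τ ^ 2 else 0 := by
  obtain ⟨a, y⟩ := q
  obtain ⟨a', y'⟩ := q'
  simp only [columnPerturbation, map_smul, LinearMap.smul_apply, frobInner_vecMulVec,
    single_dotProduct, one_mul, smul_eq_mul, Prod.mk.injEq]
  rcases eq_or_ne y y' with rfl | hy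
  · rw [hW, Pi.single_eq_same]
    split_ifs <;> simp_all [sq]
  · rw [Pi.single_eq_of_ne hy, if_neg fun h => hy h.2]
    simp

lemma dotProduct_col_cubeVertex_columnPerturbation [Fintype P] [Fintype ι] [DecidableEq ι]
    {D : Matrix M P ℝ} (hD : hasUnitColumns D) {W : P → ι → M → ℝ}
    (hW : ∀ y a a', W y a ⬝ᵥ W y a' = if a = a' then 1 else 0) (hDW : ∀ y a, D.col y ⬝ᵥ W y a = 0)
    (α τ : ℝ) (u : ι × P → ℤˣ) (y : P) :
    (cubeVertex (α • D) (columnPerturbation τ W) u).col y ⬝ᵥ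
        (cubeVertex (α • D) (columnPerturbation τ W) u).col y =
      α ^ 2 + τ ^ 2 * Fintype.card ι := by
  rw [col_cubeVertex_columnPerturbation]
  exact dotProduct_self_smul_add_smul_sum (hasUnitColumns_iff_dotProduct_col.1 hD y) (hW y)
    (hDW y) (fun a => intUnits_cast_sq (u (a, y))) α τ

lemma exists_cube_hasUnitColumns [Fintype P] {D : Matrix M P ℝ} (hD : hasUnitColumns D) {n : ℕ}
    (hM : Fintype.card M = n + 1) (hn : n ≠ 0) {s : ℝ} (hs0 : 0 ≤ s) (hs1 : s ≤ 1) :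
    ∃ (A : Matrix M P ℝ) (B : Fin n × P → Matrix M P ℝ),
      (∀ q q', frobInner (B q) (B q') = if q = q' then s / n else 0) ∧
      ∀ u, hasUnitColumns (cubeVertex A B u) ∧
        frobNormSq (cubeVertex A B u - D) = 2 * (1 - √(1 - s)) * Fintype.card P := by
  have hD0 (y : P) : D.col y ≠ 0 := fun h => by
    simpa [h] using hasUnitColumns_iff_dotProduct_col.1 hD y
  choose W hW hDW using fun y => exists_orthonormal_dotProduct_eq_zero hM (hD0 y)
  set α := √(1 - s)
  set τ := √(s / n)
  have hα : α ^ 2 = 1 - s := Real.sq_sqrt (by linarith)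
  have hτ : τ ^ 2 = s / n := Real.sq_sqrt (by positivity)
  have hτn : τ ^ 2 * Fintype.card (Fin n) = s := by
    rw [hτ, Fintype.card_fin, div_mul_cancel₀ _ (mod_cast hn)]
  have normSq_col := dotProduct_col_cubeVertex_columnPerturbation hD hW hDW
  refine ⟨α • D, columnPerturbation τ W, fun q q' => hτ ▸ frobInner_columnPerturbation hW τ q q',
    fun u => ⟨hasUnitColumns_iff_dotProduct_col.2 fun y => ?_, ?_⟩⟩
  · rw [normSq_col, hα, hτn, sub_add_cancel]
  · have sub_eq : cubeVertex (α • D) (columnPerturbation τ W) u - D =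
        cubeVertex ((α - 1) • D) (columnPerturbation τ W) u := by
      rw [cubeVertex, cubeVertex]; module
    rw [sub_eq, frobNormSq_eq_sum_dotProduct_col]
    simp only [normSq_col, hτn, Finset.sum_const, Finset.card_univ, nsmul_eq_mul]
    linear_combination (Fintype.card P : ℝ) * hα

end UnitColumns

section Kronecker

variable {K : ℕ} {m p : Fin K → ℕ}

lemma frobInner_kronFamily (A B : ∀ k, Matrix (Fin (m k)) (Fin (p k)) ℝ) :
    frobInner (kronFamily A) (kronFamily B) = ∏ k, frobInner (A k) (B k) := by
  simp only [frobInner_apply, kronFamily, of_apply, Finset.prod_univ_sum, Fintype.piFinset_univ,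
    Finset.prod_mul_distrib]

variable (D : ∀ k, Matrix (Fin (m k)) (Fin (p k)) ℝ) (k : Fin K)

lemma kronFamily_update_apply (X : Matrix (Fin (m k)) (Fin (p k)) ℝ) (i : ∀ k, Fin (m k))
    (j : ∀ k, Fin (p k)) :
    kronFamily (Function.update D k X) i j =
      X (i k) (j k) * ∏ l ∈ {k}ᶜ, D l (i l) (j l) := by
  rw [kronFamily, of_apply, Fintype.prod_eq_mul_prod_compl k, Function.update_self]
  congr 1
  refine Finset.prod_congr rfl fun l hl => ?_
  rw [Function.update_of_ne (by simpa using hl)]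

/-- The Kronecker product of the family `D` as a linear function of its `k`-th factor. -/
def kronSlot : Matrix (Fin (m k)) (Fin (p k)) ℝ →ₗ[ℝ]
    Matrix (∀ k, Fin (m k)) (∀ k, Fin (p k)) ℝ where
  toFun X := kronFamily (Function.update D k X)
  map_add' X Y := by
    ext i j
    simp only [kronFamily_update_apply, Matrix.add_apply, add_mul]
  map_smul' c X := by
    ext i j
    simp only [kronFamily_update_apply, Matrix.smul_apply, smul_eq_mul, mul_assoc, RingHom.id_apply]

lemma kronSlot_apply (X : Matrix (Fin (m k)) (Fin (p k)) ℝ) :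
    kronSlot D k X = kronFamily (Function.update D k X) := rfl

lemma kronSlot_self : kronSlot D k (D k) = kronFamily D := by
  rw [kronSlot_apply, Function.update_eq_self]

variable {D}

lemma frobInner_kronSlot (hD : ∀ l, hasUnitColumns (D l))
    (X Y : Matrix (Fin (m k)) (Fin (p k)) ℝ) :
    frobInner (kronSlot D k X) (kronSlot D k Y) = (∏ l ∈ {k}ᶜ, (p l : ℝ)) * frobInner X Y := by
  rw [kronSlot_apply, kronSlot_apply, frobInner_kronFamily, Fintype.prod_eq_mul_prod_compl k,
    Function.update_self, Function.update_self, mul_comm]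
  congr 1
  refine Finset.prod_congr rfl fun l hl => ?_
  have hlk : l ≠ k := by simpa using hl
  rw [Function.update_of_ne hlk, Function.update_of_ne hlk, frobInner_self,
    frobNormSq_of_hasUnitColumns (hD l), Fintype.card_fin]

lemma kronSlot_mem_ksClass (hD : ∀ l, hasUnitColumns (D l))
    {X : Matrix (Fin (m k)) (Fin (p k)) ℝ} (hX : hasUnitColumns X) :
    kronSlot D k X ∈ ksClass K m p :=
  ⟨_, (Function.forall_update_iff D fun _ => hasUnitColumns).2 ⟨hX, fun l _ => hD l⟩, rfl⟩

lemma kronSlot_mem_ksBall_iff (hD : ∀ l, hasUnitColumns (D l))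
    {X : Matrix (Fin (m k)) (Fin (p k)) ℝ} (hX : hasUnitColumns X) {r : ℝ} (hr : 0 < r) :
    kronSlot D k X ∈ ksBall K m p (kronFamily D) r ↔
      (∏ l ∈ {k}ᶜ, (p l : ℝ)) * frobNormSq (X - D k) < r ^ 2 := by
  rw [ksBall, Set.mem_sep_iff, and_iff_right (kronSlot_mem_ksClass k hD hX), frobNorm,
    Real.sqrt_lt' hr, ← kronSlot_self D k, ← map_sub, ← frobInner_self, frobInner_kronSlot k hD,
    frobInner_self]

end Kronecker

lemma one_sub_sqrt_one_sub_lt {s : ℝ} (hs0 : 0 < s) (hs1 : s < 1) : 1 - √(1 - s) < s := by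
  have : 1 - s < √(1 - s) := Real.lt_sqrt_of_sq_lt (by nlinarith)
  linarith

section KroneckerRisk

variable {K N : ℕ} {m p : Fin K → ℕ} {ν : Measure ((∀ k, Fin (p k)) → ℝ)} [IsProbabilityMeasure ν]
  {S : Matrix (∀ k, Fin (p k)) (∀ k, Fin (p k)) ℝ}

lemma ofReal_le_minimaxRisk_ksBall
    (hint : ∀ i j, Integrable (fun x => x i * x j) ν) (hS : ∀ i j, ∫ x, x i * x j ∂ν = S i j)
    {σ : ℝ≥0} (hσ : σ ≠ 0) (hp : ∀ k, p k ≠ 0) {D : ∀ k, Matrix (Fin (m k)) (Fin (p k)) ℝ}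
    (hD : ∀ k, hasUnitColumns (D k)) (k : Fin K) {n : ℕ} (hmk : m k = n + 1) (hn : n ≠ 0)
    {s : ℝ} (hs0 : 0 < s) (hs1 : s ≤ 1) {r : ℝ} (hr : 0 < r)
    (hsr : 2 * (1 - √(1 - s)) * ∏ k, (p k : ℝ) < r ^ 2)
    (hclose : N * specNorm S * (2 * (s * ∏ k, (p k : ℝ))) ≤ σ ^ 2 * (n * p k)) :
    ENNReal.ofReal (s / 2 * ∏ k, (p k : ℝ)) ≤
      minimaxRisk N ν σ (ksBall K m p (kronFamily D) r) := by
  obtain ⟨A, B, hB, hcube⟩ := exists_cube_hasUnitColumns (hD k)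
    ((Fintype.card_fin _).trans hmk) hn hs0.le hs1
  set Q := ∏ l ∈ {k}ᶜ, (p l : ℝ)
  have hPQ : ∏ k, (p k : ℝ) = p k * Q := Fintype.prod_eq_mul_prod_compl k _
  have hpk : (0 : ℝ) < p k := mod_cast (hp k).bot_lt
  have hn' : (0 : ℝ) < n := mod_cast hn.bot_lt
  have hQ : 0 < Q := Finset.prod_pos fun l _ => mod_cast (hp l).bot_lt
  have hsQ : N * specNorm S * (2 * (Q * (s / n))) ≤ σ ^ 2 := by
    refine le_of_mul_le_mul_right (le_trans (le_of_eq ?_) hclose) (mul_pos hn' hpk)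
    rw [hPQ]
    field_simp
  have hmem (u : Fin n × Fin (p k) → ℤˣ) :
      cubeVertex (kronSlot D k A) (fun q => kronSlot D k (B q)) u ∈
        ksBall K m p (kronFamily D) r := by
    rw [← map_cubeVertex, kronSlot_mem_ksBall_iff k hD (hcube u).1 hr, (hcube u).2,
      Fintype.card_fin]
    linarith [hPQ ▸ hsr]
  have card_mul_le := card_mul_le_two_mul_minimaxRisk hint hS hσ (mul_pos hQ (div_pos hs0 hn'))
    (fun q q' => by rw [frobInner_kronSlot k hD, hB, mul_ite, mul_zero]) hsQ hmem
  refine (ENNReal.mul_le_mul_iff_right two_ne_zero ENNReal.ofNat_ne_top).1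
    (le_trans (le_of_eq ?_) card_mul_le)
  rw [← ENNReal.ofReal_natCast, ← ENNReal.ofReal_ofNat, ← ENNReal.ofReal_mul (by positivity),
    ← ENNReal.ofReal_mul (by positivity), hPQ]
  simp only [Fintype.card_prod, Fintype.card_fin]
  congr 1
  push_cast
  field_simp

lemma ofReal_div_four_le_minimaxRisk_ksBall
    (hint : ∀ i j, Integrable (fun x => x i * x j) ν) (hS : ∀ i j, ∫ x, x i * x j ∂ν = S i j)
    {σ : ℝ≥0} (hσ : σ ≠ 0) (hp : ∀ k, p k ≠ 0) {D : ∀ k, Matrix (Fin (m k)) (Fin (p k)) ℝ}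
    (hD : ∀ k, hasUnitColumns (D k)) (k : Fin K) (hmk : 1 < m k) {r : ℝ} (hr : 0 < r) {μ : ℝ}
    (hμ : 0 < μ) (hμp : μ ≤ ∏ k, (p k : ℝ)) (hμr : μ ≤ r ^ 2)
    (hclose : μ * (N * specNorm S) ≤ σ ^ 2 * (((m k : ℝ) - 1) * p k)) :
    ENNReal.ofReal (μ / 4) ≤ minimaxRisk N ν σ (ksBall K m p (kronFamily D) r) := by
  obtain ⟨n, hn⟩ := Nat.exists_eq_add_of_le' hmk
  set q := ∏ k, (p k : ℝ)
  have hq : 0 < q := hμ.trans_le hμp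
  set s := μ / (2 * q)
  have hs0 : 0 < s := by positivity
  have hs1 : s < 1 := (div_lt_one (by positivity)).2 (by linarith)
  have hsq : s * q = μ / 2 := by simp only [s]; field_simp
  have hradius : 2 * (1 - √(1 - s)) * q < r ^ 2 := by
    linarith [mul_lt_mul_of_pos_right (one_sub_sqrt_one_sub_lt hs0 hs1) hq]
  have hclose' : N * specNorm S * (2 * (s * q)) ≤ σ ^ 2 * ((n + 1 : ℕ) * p k) := by
    rw [hn] at hclose
    rw [hsq]
    push_cast at hclose ⊢
    linarith
  refine le_trans (le_of_eq ?_) (ofReal_le_minimaxRisk_ksBall hint hS hσ hp hD k hn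
    n.succ_ne_zero hs0 hs1.le hr hradius hclose')
  congr 1
  linarith

lemma ofReal_min_le_minimaxRisk_ksBall
    (hint : ∀ i j, Integrable (fun x => x i * x j) ν) (hS : ∀ i j, ∫ x, x i * x j ∂ν = S i j)
    (σ : ℝ≥0) {D₀ : Matrix (∀ k, Fin (m k)) (∀ k, Fin (p k)) ℝ} (hD₀ : D₀ ∈ ksClass K m p)
    {r : ℝ} (hr : 0 < r) (k : Fin K) :
    ENNReal.ofReal (1 / 4 * min (∏ k, (p k : ℝ))
      (min (r ^ 2) (σ ^ 2 / (N * specNorm S) * (((m k : ℝ) - 1) * p k)))) ≤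
      minimaxRisk N ν σ (ksBall K m p D₀ r) := by
  obtain ⟨D, hD, rfl⟩ := hD₀
  set noiseTerm := (σ : ℝ) ^ 2 / (N * specNorm S) * (((m k : ℝ) - 1) * p k)
  set μ := min (∏ k, (p k : ℝ)) (min (r ^ 2) noiseTerm)
  rcases le_or_gt μ 0 with hμ | hμ
  · rw [ENNReal.ofReal_of_nonpos (by linarith)]
    exact zero_le
  have hμp : μ ≤ ∏ k, (p k : ℝ) := min_le_left _ _
  have hμr : μ ≤ r ^ 2 := (min_le_right _ _).trans (min_le_left _ _)
  have hμnoise : μ ≤ noiseTerm := (min_le_right _ _).trans (min_le_right _ _)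
  have hp (l : Fin K) : p l ≠ 0 := fun h =>
    (hμ.trans_le hμp).ne' (Finset.prod_eq_zero (Finset.mem_univ l) (by rw [h, Nat.cast_zero]))
  have hnoise := hμ.trans_le hμnoise
  have hNS : 0 ≤ N * specNorm S := mul_nonneg N.cast_nonneg (specNorm_nonneg S)
  have hσNS : (σ : ℝ) ^ 2 / (N * specNorm S) ≠ 0 := left_ne_zero_of_mul hnoise.ne'
  have hσ : σ ≠ 0 := fun h => hσNS (by simp [h])
  have hNS0 : N * specNorm S ≠ 0 := fun h => hσNS (by rw [h, div_zero])
  have hdim : 0 < ((m k : ℝ) - 1) * p k :=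
    pos_of_mul_pos_right hnoise (div_nonneg (sq_nonneg _) hNS)
  have hmk : (1 : ℝ) < m k := sub_pos.1 (pos_of_mul_pos_left hdim (Nat.cast_nonneg _))
  have hclose : μ * (N * specNorm S) ≤ σ ^ 2 * (((m k : ℝ) - 1) * p k) := by
    rwa [← le_div_iff₀ (hNS.lt_of_ne' hNS0), mul_div_right_comm]
  rw [one_div_mul_eq_div]
  exact ofReal_div_four_le_minimaxRisk_ksBall hint hS hσ hp hD k (mod_cast hmk) hr hμ hμp
    hμr hclose

end KroneckerRisk

theorem minimax_lower_bound_general_general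
    (K N : ℕ) (hK : 0 < K) (m p : Fin K → ℕ) (hm : ∀ k, 0 < m k) (σ : ℝ≥0) (r : ℝ) (hr : 0 < r)
    (D0 : Matrix (∀ k, Fin (m k)) (∀ k, Fin (p k)) ℝ) (hD0 : D0 ∈ ksClass K m p)
    (ν : Measure ((∀ k, Fin (p k)) → ℝ)) [IsProbabilityMeasure ν]
    (Sigx : Matrix (∀ k, Fin (p k)) (∀ k, Fin (p k)) ℝ)
    (hint2 : ∀ i j, Integrable (fun x => x i * x j) ν)
    (hcov : ∀ i j, ∫ x, x i * x j ∂ν = Sigx i j)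
    (t c₁ : ℝ) (ht0 : 0 ≤ t) (ht1 : t ≤ 1) (hc0 : 0 ≤ c₁) (hc1 : c₁ ≤ 4) :
    ENNReal.ofReal (t / 4 *
      min (∏ k, (p k : ℝ))
        (min (r ^ 2 / (2 * (K : ℝ)))
          ((σ : ℝ) ^ 2 / (4 * (N : ℝ) * (K : ℝ) * specNorm Sigx) *
            (c₁ * (∑ k, ((m k : ℝ) - 1) * (p k : ℝ)) -
              (K : ℝ) / 2 * Real.logb 2 (2 * (K : ℝ)) - 2)))) ≤
      minimaxRisk N ν σ (ksBall K m p D0 r) := by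
  have : Nonempty (Fin K) := ⟨⟨0, hK⟩⟩
  obtain ⟨k, hk⟩ := Finite.exists_max fun k => ((m k : ℝ) - 1) * (p k : ℝ)
  refine le_trans (ENNReal.ofReal_le_ofReal ?_)
    (ofReal_min_le_minimaxRisk_ksBall hint2 hcov σ hD0 hr k)
  have hK1 : (1 : ℝ) ≤ K := mod_cast hK
  have hdim : 0 ≤ ((m k : ℝ) - 1) * p k :=
    mul_nonneg (sub_nonneg.2 (mod_cast hm k)) (Nat.cast_nonneg _)
  have hS : 0 ≤ specNorm Sigx := specNorm_nonneg Sigx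
  have hsum : ∑ k, ((m k : ℝ) - 1) * p k ≤ K * (((m k : ℝ) - 1) * p k) := by
    simpa using Finset.sum_le_sum fun l (_ : l ∈ Finset.univ) => hk l
  have hlog : 0 ≤ (K : ℝ) / 2 * Real.logb 2 (2 * K) :=
    mul_nonneg (by positivity) (Real.logb_nonneg one_lt_two (by linarith))
  have radius_le : r ^ 2 / (2 * (K : ℝ)) ≤ r ^ 2 := div_le_self (sq_nonneg r) (by linarith)
  have dim_le : c₁ * (∑ k, ((m k : ℝ) - 1) * p k) - K / 2 * Real.logb 2 (2 * K) - 2 ≤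
      4 * K * (((m k : ℝ) - 1) * p k) := by
    nlinarith [mul_le_mul_of_nonneg_left hsum hc0, mul_nonneg (zero_le_one.trans hK1) hdim]
  have noise_eq : (σ : ℝ) ^ 2 / (4 * N * K * specNorm Sigx) * (4 * K * (((m k : ℝ) - 1) * p k)) =
      σ ^ 2 / (N * specNorm Sigx) * (((m k : ℝ) - 1) * p k) := by
    field_simp
  have noise_le := (mul_le_mul_of_nonneg_left dim_le
    (by positivity : (0 : ℝ) ≤ σ ^ 2 / (4 * N * K * specNorm Sigx))).trans_eq noise_eq
  have target_nonneg : 0 ≤ min (∏ k, (p k : ℝ)) (min (r ^ 2)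
      (σ ^ 2 / (N * specNorm Sigx) * (((m k : ℝ) - 1) * p k))) :=
    le_min (by positivity) (le_min (by positivity) (by positivity))
  exact (mul_le_mul_of_nonneg_left (min_le_min_left _ (min_le_min radius_le noise_le))
    (by positivity)).trans (mul_le_mul_of_nonneg_right (by linarith) target_nonneg)

/-- **Theorem 1** (minimax lower bound for KS dictionary learning, general coefficient
distribution). -/
theorem minimax_lower_bound_general
    (K N : ℕ) (hK : 0 < K) (m p : Fin K → ℕ) (hm : ∀ k, 0 < m k) (hp : ∀ k, 0 < p k)
    (σ : ℝ≥0) (hσ : 0 < σ) (r : ℝ) (hr : 0 < r)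
    (D0 : Matrix (∀ k, Fin (m k)) (∀ k, Fin (p k)) ℝ) (hD0 : D0 ∈ ksClass K m p)
    (ν : Measure ((∀ k, Fin (p k)) → ℝ)) [IsProbabilityMeasure ν]
    (Sigx : Matrix (∀ k, Fin (p k)) (∀ k, Fin (p k)) ℝ)
    (hint1 : ∀ i, Integrable (fun x => x i) ν)
    (hmean : ∀ i, ∫ x, x i ∂ν = 0)
    (hint2 : ∀ i j, Integrable (fun x => x i * x j) ν)
    (hcov : ∀ i j, ∫ x, x i * x j ∂ν = Sigx i j)
    (t c₁ : ℝ) (ht0 : 0 < t) (ht1 : t < 1)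
    (hc0 : 0 < c₁) (hc1 : c₁ < (1 - t) / (8 * Real.log 2)) :
    ENNReal.ofReal (t / 4 *
      min (∏ k, (p k : ℝ))
        (min (r ^ 2 / (2 * (K : ℝ)))
          ((σ : ℝ) ^ 2 / (4 * (N : ℝ) * (K : ℝ) * specNorm Sigx) *
            (c₁ * (∑ k, ((m k : ℝ) - 1) * (p k : ℝ)) -
              (K : ℝ) / 2 * Real.logb 2 (2 * (K : ℝ)) - 2)))) ≤
      minimaxRisk N ν σ (ksBall K m p D0 r) := by
  refine minimax_lower_bound_general_general K N hK m p hm σ r hr D0 hD0 ν Sigx hint2 hcov t c₁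
    ht0.le ht1.le hc0.le (hc1.le.trans ((div_le_iff₀ (by positivity)).2 ?_))
  linarith [Real.log_two_gt_d9]

end
end

section
/- Let α > 0, β > 0, and let L ≥ 2 and m, p ≥ 1 be integers such that 2 L² exp( − β²/(4 α⁴ m p) ) < 1. Then there exist L matrices A_1, …, A_L ∈ {−α, +α}^{m×p} such that |⟨A_l, A_{l'}⟩| < β for every pair l ≠ l', where ⟨X,Y⟩ = Tr(Xᵀ Y). -/
open Real

noncomputable section

/-!
If `ε` is a uniformly random sign vector, its inner product with any fixed vector is sub-Gaussian,
so Hoeffding's bound and a union bound show that `ε` is almost orthogonal to `k` given vectors with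
positive probability as long as `2 k exp(-t² / 2c) < 1`, where `c` is the sub-Gaussian parameter.
Choosing the vectors greedily, one at a time, only ever involves `k ≤ L - 1` constraints, so the
condition obtained is linear in `L`.
-/

open MeasureTheory ProbabilityTheory
open scoped NNReal

section Subgaussian

variable {Ω κ : Type*} [MeasurableSpace Ω] {μ : Measure Ω} {c : ℝ≥0} {t : ℝ}

theorem measureReal_abs_ge_le_of_hasSubgaussianMGF {X : Ω → ℝ}
    (hX : HasSubgaussianMGF X c μ) (ht : 0 ≤ t) :
    μ.real {ω | t ≤ |X ω|} ≤ 2 * exp (-t ^ 2 / (2 * c)) := by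
  calc μ.real {ω | t ≤ |X ω|}
      = μ.real ({ω | t ≤ X ω} ∪ {ω | t ≤ (-X) ω}) := by
        simp only [le_abs, Set.ofPred_or, Pi.neg_apply]
    _ ≤ μ.real {ω | t ≤ X ω} + μ.real {ω | t ≤ (-X) ω} := measureReal_union_le _ _
    _ ≤ exp (-t ^ 2 / (2 * c)) + exp (-t ^ 2 / (2 * c)) :=
        add_le_add (hX.measure_ge_le ht) (hX.neg.measure_ge_le ht)
    _ = 2 * exp (-t ^ 2 / (2 * c)) := (two_mul _).symm

theorem exists_forall_abs_lt_of_hasSubgaussianMGF [Fintype κ] [IsProbabilityMeasure μ]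
    {X : κ → Ω → ℝ} (hX : ∀ k, HasSubgaussianMGF (X k) c μ) (ht : 0 ≤ t)
    (hκ : 2 * Fintype.card κ * exp (-t ^ 2 / (2 * c)) < 1) :
    ∃ ω, ∀ k, |X k ω| < t := by
  by_contra! hbad
  have hcover : ⋃ k, {ω | t ≤ |X k ω|} = Set.univ := by
    simpa only [Set.iUnion_eq_univ_iff, Set.mem_ofPred_eq] using hbad
  refine hκ.not_ge ?_
  calc 1 = μ.real (⋃ k, {ω | t ≤ |X k ω|}) := by rw [hcover, probReal_univ]
    _ ≤ ∑ k, μ.real {ω | t ≤ |X k ω|} := measureReal_iUnion_fintype_le _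
    _ ≤ ∑ _k : κ, 2 * exp (-t ^ 2 / (2 * c)) :=
        Finset.sum_le_sum fun k _ ↦ measureReal_abs_ge_le_of_hasSubgaussianMGF (hX k) ht
    _ = 2 * Fintype.card κ * exp (-t ^ 2 / (2 * c)) := by
        rw [Finset.sum_const, Finset.card_univ, nsmul_eq_mul]
        ring

end Subgaussian

section SignVectors

instance measurableSingletonClass_units {M : Type*} [Monoid M] [MeasurableSpace M]
    [MeasurableSingletonClass M] : MeasurableSingletonClass Mˣ where
  measurableSet_singleton u := ⟨{↑u}, measurableSet_singleton _, by ext; simp [Units.ext_iff]⟩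

/-- The uniform probability measure on the two signs, `ℤˣ = {1, -1}`. -/
def rademacherMeasure : Measure ℤˣ := (PMF.uniformOfFintype ℤˣ).toMeasure

instance : IsProbabilityMeasure rademacherMeasure :=
  inferInstanceAs (IsProbabilityMeasure (PMF.uniformOfFintype ℤˣ).toMeasure)

theorem integral_rademacherMeasure : ∫ u : ℤˣ, ((u : ℤ) : ℝ) ∂rademacherMeasure = 0 := by
  simp [rademacherMeasure, PMF.integral_eq_sum, UnitsInt.univ]

theorem hasSubgaussianMGF_rademacherMeasure :
    HasSubgaussianMGF (fun u : ℤˣ ↦ ((u : ℤ) : ℝ)) 1 rademacherMeasure := by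
  have hmem : ∀ u : ℤˣ, ((u : ℤ) : ℝ) ∈ Set.Icc (-1 : ℝ) 1 := by
    intro u
    rcases Int.units_eq_one_or u with rfl | rfl <;> norm_num
  have hparam : (‖(1 : ℝ) - -1‖₊ / 2) ^ 2 = 1 := NNReal.eq (by norm_num)
  simpa only [hparam] using hasSubgaussianMGF_of_mem_Icc_of_integral_eq_zero
    Measurable.of_discrete.aemeasurable (ae_of_all _ hmem) integral_rademacherMeasure

variable {ι : Type*} [Fintype ι]

/-- The sum of the weights `w` with signs `ε`. Taking `w` constantly `α ^ 2`, `signedSum w (σ * ε)`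
is the inner product of the `±α`-vectors with sign patterns `σ` and `ε`. -/
def signedSum (w : ι → ℝ) (ε : ι → ℤˣ) : ℝ := ∑ i, w i * (ε i : ℤ)

theorem signedSum_mul (w : ι → ℝ) (σ ε : ι → ℤˣ) :
    signedSum w (σ * ε) = signedSum (fun i ↦ w i * (σ i : ℤ)) ε := by
  simp only [signedSum, Pi.mul_apply, Units.val_mul, Int.cast_mul, mul_assoc]

theorem hasSubgaussianMGF_signedSum (w : ι → ℝ) :
    HasSubgaussianMGF (signedSum w) (∑ i, ‖w i‖₊ ^ 2)
      (Measure.pi fun _ : ι ↦ rademacherMeasure) := by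
  have hindep : iIndepFun (fun i (ε : ι → ℤˣ) ↦ w i * (ε i : ℤ))
      (Measure.pi fun _ ↦ rademacherMeasure) :=
    iIndepFun_pi (X := fun i (u : ℤˣ) ↦ w i * (u : ℤ)) fun _ ↦ Measurable.of_discrete.aemeasurable
  have hterm (i : ι) : HasSubgaussianMGF (fun ε : ι → ℤˣ ↦ w i * (ε i : ℤ)) (‖w i‖₊ ^ 2)
      (Measure.pi fun _ ↦ rademacherMeasure) := by
    have hcoord : HasSubgaussianMGF (fun u : ℤˣ ↦ ((u : ℤ) : ℝ)) 1
        ((Measure.pi fun _ : ι ↦ rademacherMeasure).map fun ε ↦ ε i) := by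
      rw [(measurePreserving_eval _ i).map_eq]
      exact hasSubgaussianMGF_rademacherMeasure
    have hsign := HasSubgaussianMGF.of_map (Y := fun ε : ι → ℤˣ ↦ ε i)
      (measurable_pi_apply i).aemeasurable hcoord
    have hparam : ‖w i‖₊ ^ 2 = .mk (w i ^ 2) (sq_nonneg (w i)) * 1 := NNReal.eq (by simp)
    exact hparam ▸ hsign.const_mul (w i)
  exact HasSubgaussianMGF.sum_of_iIndepFun hindep fun i _ ↦ hterm i

theorem hasSubgaussianMGF_signedSum_mul (w : ι → ℝ) (σ : ι → ℤˣ) :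
    HasSubgaussianMGF (fun ε ↦ signedSum w (σ * ε)) (∑ i, ‖w i‖₊ ^ 2)
      (Measure.pi fun _ : ι ↦ rademacherMeasure) := by
  have hnorm (i : ι) : ‖w i * (σ i : ℤ)‖₊ = ‖w i‖₊ := by
    rcases Int.units_eq_one_or (σ i) with h | h <;> simp [h]
  simpa only [signedSum_mul, hnorm] using hasSubgaussianMGF_signedSum fun i ↦ w i * (σ i : ℤ)

end SignVectors

theorem exists_fin_pairwise_of_forall_exists {V : Type*} {r : V → V → Prop} [Std.Symm r] {n : ℕ}
    (h : ∀ k < n, ∀ x : Fin k → V, ∃ y, ∀ i, r y (x i)) :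
    ∃ x : Fin n → V, Pairwise (Function.onFun r x) := by
  induction n with
  | zero => exact ⟨Fin.elim0, fun i ↦ i.elim0⟩
  | succ n ih =>
    obtain ⟨x, hx⟩ := ih fun k hk ↦ h k (hk.trans n.lt_succ_self)
    obtain ⟨y, hy⟩ := h n n.lt_succ_self x
    refine ⟨Fin.cons y x, ?_⟩
    rw [pairwise_fin_succ_iff_of_isSymm]
    exact ⟨hy, hx⟩

theorem exists_pairwise_abs_signedSum_mul_lt {ι : Type*} [Fintype ι] (w : ι → ℝ) (L : ℕ) {t : ℝ}
    (ht : 0 ≤ t) (hL : 2 * ((L : ℝ) - 1) * exp (-t ^ 2 / (2 * ∑ i, w i ^ 2)) < 1) :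
    ∃ ε : Fin L → ι → ℤˣ, Pairwise fun k l ↦ |signedSum w (ε k * ε l)| < t := by
  let r (σ τ : ι → ℤˣ) : Prop := |signedSum w (σ * τ)| < t
  have : Std.Symm r := ⟨fun σ τ h ↦ by simpa only [r, mul_comm] using h⟩
  refine exists_fin_pairwise_of_forall_exists (r := r) fun k hk σ ↦ ?_
  have hkL : (k : ℝ) ≤ L - 1 := le_sub_iff_add_le.2 (mod_cast hk)
  have hfew : 2 * Fintype.card (Fin k) *
      exp (-t ^ 2 / (2 * (∑ i, ‖w i‖₊ ^ 2 : ℝ≥0))) < 1 := by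
    push_cast
    simp only [Fintype.card_fin, norm_eq_abs, sq_abs]
    exact lt_of_le_of_lt (by gcongr) hL
  obtain ⟨ε, hε⟩ := exists_forall_abs_lt_of_hasSubgaussianMGF
    (fun i ↦ hasSubgaussianMGF_signedSum_mul w (σ i)) ht hfew
  exact ⟨ε, fun i ↦ by simpa only [r, mul_comm] using hε i⟩

theorem exists_separated_sign_matrices_general {m n : Type*} [Fintype m] [Fintype n]
    [Nonempty m] [Nonempty n] (L : ℕ) (α β : ℝ) (hα : α ≠ 0) (hβ : 0 ≤ β)
    (h : 2 * ((L : ℝ) - 1) *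
      exp (-β ^ 2 / (2 * α ^ 4 * Fintype.card m * Fintype.card n)) < 1) :
    ∃ A : Fin L → Matrix m n ℝ,
      (∀ l i j, A l i j = α ∨ A l i j = -α) ∧
      ∀ l l' : Fin L, l ≠ l' → |∑ i, ∑ j, A l i j * A l' i j| < β := by
  have hsum : 2 * ∑ _ij : m × n, (α ^ 2) ^ 2 = 2 * α ^ 4 * Fintype.card m * Fintype.card n := by
    rw [Finset.sum_const, Finset.card_univ, Fintype.card_prod, nsmul_eq_mul]
    push_cast
    ring
  obtain ⟨ε, hε⟩ := exists_pairwise_abs_signedSum_mul_lt (fun _ : m × n ↦ α ^ 2) L hβ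
    (hsum ▸ h)
  refine ⟨fun l i j ↦ α * (ε l (i, j) : ℤ), fun l i j ↦ ?_, fun l l' hne ↦ ?_⟩
  · rcases Int.units_eq_one_or (ε l (i, j)) with hsign | hsign <;> simp [hsign]
  · convert hε hne using 2
    simp only [signedSum, Fintype.sum_prod_type, Pi.mul_apply, Units.val_mul, Int.cast_mul]
    exact Finset.sum_congr rfl fun i _ ↦ Finset.sum_congr rfl fun j _ ↦ by ring

/-- **Existence of well-separated sign matrices**: if `2 L² exp(-β²/(4α⁴ m p)) < 1`,
then there exist `L` matrices with `±α` entries whose pairwise trace inner products are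
all smaller than `β` in absolute value. -/
theorem exists_separated_sign_matrices (L m p : ℕ) (hL : 2 ≤ L) (hm : 1 ≤ m) (hp : 1 ≤ p)
    (α β : ℝ) (hα : 0 < α) (hβ : 0 < β)
    (h : 2 * (L : ℝ) ^ 2 * Real.exp (-β ^ 2 / (4 * α ^ 4 * (m : ℝ) * (p : ℝ))) < 1) :
    ∃ A : Fin L → Matrix (Fin m) (Fin p) ℝ,
      (∀ l i j, A l i j = α ∨ A l i j = -α) ∧
      ∀ l l' : Fin L, l ≠ l' → |∑ i, ∑ j, A l i j * A l' i j| < β := by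
  have : Nonempty (Fin m) := Fin.pos_iff_nonempty.1 hm
  have : Nonempty (Fin p) := Fin.pos_iff_nonempty.1 hp
  refine exists_separated_sign_matrices_general L α β hα.ne' hβ.le (lt_of_le_of_lt ?_ h)
  have hL_sq : (L : ℝ) - 1 ≤ L ^ 2 := by nlinarith [sq_nonneg ((L : ℝ) - 1)]
  simp only [Fintype.card_fin, neg_div]
  gcongr
  norm_num

end
end

section
/- Let K ≥ 1, r > 0, and 0 < ε' < r². For each k ∈ [K] let D_{(k,0)}, D_{(k,1)} ∈ ℝ^{m_k × p_k} be matrices such that every column of D_{(k,0)} has unit ℓ₂ norm, every column of D_{(k,1)} has ℓ₂ norm r^{−1/K}, and for every j the j-th column of D_{(k,0)} is orthogonal to the j-th column of D_{(k,1)}. Set η = √(1 − ε'/r²), ν = √(r^{2/K} ε'/r²), and D_k = η D_{(k,0)} + ν D_{(k,1)}. Then (i) every column of D = D_1 ⊗ ⋯ ⊗ D_K has unit ℓ₂ norm, and (ii) ‖D − D_{(1,0)} ⊗ ⋯ ⊗ D_{(K,0)}‖²_F ≤ 2Kp ε'/r², where p = ∏_{k=1}^K p_k. -/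
open Matrix Real

noncomputable section

/-!
The squared distance between unit vectors `a` and `b` is `2 (1 - ⟪a, b⟫)`, and by the mixed-product
property the inner product of two Kronecker columns is the product of the inner products of their
factors. By orthogonality each factor contributes `√(1 - x) ≥ 1 - x` with `x = ε' / r ^ 2`, so by
Bernoulli's inequality the product is at least `(1 - x) ^ K ≥ 1 - K x`, and each of the `p` columns
contributes at most `2 K x` to the squared Frobenius distance.
-/

section Gram

variable {m n l R : Type*} [Fintype m] [CommSemiring R]

theorem transpose_mul_self_apply_diag (A : Matrix m n R) (j : n) :
    (Aᵀ * A) j j = ∑ i, A i j ^ 2 := by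
  simp only [mul_apply, transpose_apply, sq]

theorem transpose_mul_apply_comm (A : Matrix m n R) (B : Matrix m l R) (i : n) (j : l) :
    (Aᵀ * B) i j = (Bᵀ * A) j i := by
  rw [← transpose_apply (Aᵀ * B), transpose_mul, transpose_transpose]

variable {A B : Matrix m n R} {j : n}

theorem transpose_smul_add_smul_mul_left_diag (a b : R) (horth : (Aᵀ * B) j j = 0) :
    ((a • A + b • B)ᵀ * A) j j = a * (Aᵀ * A) j j := by
  simp only [transpose_add, transpose_smul, Matrix.add_mul, smul_mul, Matrix.add_apply,
    Matrix.smul_apply, smul_eq_mul, transpose_mul_apply_comm B A, horth, mul_zero, add_zero]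

theorem transpose_smul_add_smul_mul_self_diag (a b : R) (horth : (Aᵀ * B) j j = 0) :
    ((a • A + b • B)ᵀ * (a • A + b • B)) j j =
      a ^ 2 * (Aᵀ * A) j j + b ^ 2 * (Bᵀ * B) j j := by
  simp only [transpose_add, transpose_smul, Matrix.add_mul, Matrix.mul_add, smul_mul,
    Matrix.mul_smul, Matrix.add_apply, Matrix.smul_apply, smul_eq_mul,
    transpose_mul_apply_comm B A, horth]
  ring

end Gram

section Columns

variable {m n : Type*} [Fintype m] {A B : Matrix m n ℝ}

theorem hasUnitColumns_iff_transpose_mul_self_diag :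
    hasUnitColumns A ↔ ∀ j, (Aᵀ * A) j j = 1 := by
  simp only [hasUnitColumns, transpose_mul_self_apply_diag]

theorem hasUnitColumns_smul_add_smul {a b s : ℝ} (hA : hasUnitColumns A)
    (hB : ∀ j, ∑ i, B i j ^ 2 = s) (horth : ∀ j, (Aᵀ * B) j j = 0)
    (hab : a ^ 2 + b ^ 2 * s = 1) : hasUnitColumns (a • A + b • B) := by
  rw [hasUnitColumns_iff_transpose_mul_self_diag] at hA ⊢
  intro j
  rw [transpose_smul_add_smul_mul_self_diag a b (horth j), hA, transpose_mul_self_apply_diag, hB,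
    mul_one, hab]

theorem frobNormSq_eq_trace [Fintype n] (A : Matrix m n ℝ) : frobNormSq A = (Aᵀ * A).trace := by
  simp only [frobNormSq, trace, diag_apply, transpose_mul_self_apply_diag]
  exact Finset.sum_comm

theorem frobNormSq_sub_of_hasUnitColumns [Fintype n] (hA : hasUnitColumns A)
    (hB : hasUnitColumns B) : frobNormSq (A - B) = ∑ j, 2 * (1 - (Aᵀ * B) j j) := by
  rw [hasUnitColumns_iff_transpose_mul_self_diag] at hA hB
  rw [frobNormSq_eq_trace, trace]
  refine Finset.sum_congr rfl fun j _ => ?_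
  simp only [diag_apply, transpose_sub, Matrix.sub_mul, Matrix.mul_sub, Matrix.sub_apply, hA, hB,
    transpose_mul_apply_comm B A]
  ring

end Columns

section Kronecker

variable {K : ℕ} {l m p : Fin K → ℕ}

theorem kronFamily_transpose (A : ∀ k, Matrix (Fin (m k)) (Fin (p k)) ℝ) :
    (kronFamily A)ᵀ = kronFamily fun k => (A k)ᵀ :=
  rfl

theorem kronFamily_mul (A : ∀ k, Matrix (Fin (l k)) (Fin (m k)) ℝ)
    (B : ∀ k, Matrix (Fin (m k)) (Fin (p k)) ℝ) :
    kronFamily A * kronFamily B = kronFamily fun k => A k * B k := by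
  ext i j
  simp only [kronFamily, mul_apply, of_apply, ← Finset.prod_mul_distrib, Fintype.prod_sum]

theorem kronFamily_transpose_mul_apply (A : ∀ k, Matrix (Fin (m k)) (Fin (l k)) ℝ)
    (B : ∀ k, Matrix (Fin (m k)) (Fin (p k)) ℝ) (i : ∀ k, Fin (l k)) (j : ∀ k, Fin (p k)) :
    ((kronFamily A)ᵀ * kronFamily B) i j = ∏ k, ((A k)ᵀ * B k) (i k) (j k) := by
  rw [kronFamily_transpose, kronFamily_mul, kronFamily, of_apply]

variable {A B : ∀ k, Matrix (Fin (m k)) (Fin (p k)) ℝ}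

theorem hasUnitColumns_kronFamily (hA : ∀ k, hasUnitColumns (A k)) :
    hasUnitColumns (kronFamily A) := by
  simp only [hasUnitColumns_iff_transpose_mul_self_diag] at hA ⊢
  intro j
  rw [kronFamily_transpose_mul_apply]
  exact Finset.prod_eq_one fun k _ => hA k (j k)

theorem one_sub_le_kronFamily_transpose_mul_diag {t : ℝ} (ht : 0 ≤ t)
    (hAB : ∀ k j, t ≤ ((A k)ᵀ * B k) j j) (j : ∀ k, Fin (p k)) :
    1 - K * (1 - t) ≤ ((kronFamily A)ᵀ * kronFamily B) j j :=
  calc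
    1 - K * (1 - t) = 1 + K * (t - 1) := by ring
    _ ≤ t ^ K := one_add_mul_sub_le_pow (by linarith) K
    _ = ∏ _k : Fin K, t := (Fin.prod_const K t).symm
    _ ≤ ∏ k, ((A k)ᵀ * B k) (j k) (j k) :=
      Finset.prod_le_prod (fun _ _ => ht) fun k _ => hAB k (j k)
    _ = ((kronFamily A)ᵀ * kronFamily B) j j := (kronFamily_transpose_mul_apply A B j j).symm

theorem frobNormSq_kronFamily_sub_le (hA : ∀ k, hasUnitColumns (A k))
    (hB : ∀ k, hasUnitColumns (B k)) {t : ℝ} (ht : 0 ≤ t)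
    (hAB : ∀ k j, t ≤ ((A k)ᵀ * B k) j j) :
    frobNormSq (kronFamily A - kronFamily B) ≤ 2 * K * (∏ k, (p k : ℝ)) * (1 - t) :=
  calc
    frobNormSq (kronFamily A - kronFamily B)
        = ∑ j, 2 * (1 - ((kronFamily A)ᵀ * kronFamily B) j j) :=
      frobNormSq_sub_of_hasUnitColumns (hasUnitColumns_kronFamily hA) (hasUnitColumns_kronFamily hB)
    _ ≤ ∑ _j : ∀ k, Fin (p k), 2 * (K * (1 - t)) := by
      gcongr with j
      linarith [one_sub_le_kronFamily_transpose_mul_diag ht hAB j]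
    _ = 2 * K * (∏ k, (p k : ℝ)) * (1 - t) := by
      simp only [Finset.sum_const, Finset.card_univ, Fintype.card_pi, Fintype.card_fin,
        nsmul_eq_mul, Nat.cast_prod]
      ring

end Kronecker

/-- **Perturbed Kronecker dictionaries**: mixing reference factors `D_{(k,0)}` (unit-norm
columns) with column-wise orthogonal perturbation factors `D_{(k,1)}` (columns of norm
`r^{-1/K}`) using weights `η = √(1 - ε'/r²)` and `ν = √(r^{2/K} ε'/r²)` produces a
Kronecker dictionary with unit-norm columns that is within squared Frobenius distance
`2Kp ε'/r²` of the reference Kronecker dictionary. -/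
theorem perturbed_kron_dictionary
    (K : ℕ) (hK : 0 < K) (m p : Fin K → ℕ)
    (r ε' : ℝ) (hr : 0 < r) (hε0 : 0 < ε') (hε : ε' < r ^ 2)
    (D0 D1 : ∀ k, Matrix (Fin (m k)) (Fin (p k)) ℝ)
    (hD0 : ∀ k, hasUnitColumns (D0 k))
    (hD1 : ∀ k j, ∑ i, (D1 k i j) ^ 2 = (r ^ ((2 : ℝ) / (K : ℝ)))⁻¹)
    (horth : ∀ k j, ∑ i, D0 k i j * D1 k i j = 0) :
    hasUnitColumns
      (kronFamily fun k =>
        Real.sqrt (1 - ε' / r ^ 2) • D0 k +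
          Real.sqrt (r ^ ((2 : ℝ) / (K : ℝ)) * ε' / r ^ 2) • D1 k) ∧
    frobNormSq
        (kronFamily (fun k =>
          Real.sqrt (1 - ε' / r ^ 2) • D0 k +
            Real.sqrt (r ^ ((2 : ℝ) / (K : ℝ)) * ε' / r ^ 2) • D1 k) -
          kronFamily D0) ≤
      2 * (K : ℝ) * (∏ k, (p k : ℝ)) * ε' / r ^ 2 := by
  have hx0 : 0 ≤ ε' / r ^ 2 := by positivity
  have hx1 : 0 ≤ 1 - ε' / r ^ 2 := sub_nonneg.mpr ((div_lt_one (by positivity)).mpr hε).le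
  have hc : 0 < r ^ ((2 : ℝ) / (K : ℝ)) := Real.rpow_pos_of_pos hr _
  rw [mul_div_assoc]
  have hweights : √(1 - ε' / r ^ 2) ^ 2 +
      √(r ^ ((2 : ℝ) / (K : ℝ)) * (ε' / r ^ 2)) ^ 2 * (r ^ ((2 : ℝ) / (K : ℝ)))⁻¹ = 1 := by
    rw [Real.sq_sqrt hx1, Real.sq_sqrt (mul_nonneg hc.le hx0), mul_right_comm,
      mul_inv_cancel₀ hc.ne', one_mul, sub_add_cancel]
  have hunit := fun k => hasUnitColumns_smul_add_smul (hD0 k) (hD1 k) (horth k) hweights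
  have hinner : ∀ k j, 1 - ε' / r ^ 2 ≤ ((√(1 - ε' / r ^ 2) • D0 k +
      √(r ^ ((2 : ℝ) / (K : ℝ)) * (ε' / r ^ 2)) • D1 k)ᵀ * D0 k) j j := fun k j => by
    rw [transpose_smul_add_smul_mul_left_diag _ _ (horth k j), transpose_mul_self_apply_diag,
      hD0 k j, mul_one]
    exact Real.le_sqrt_self_iff.mpr (sub_le_self 1 hx0)
  refine ⟨hasUnitColumns_kronFamily hunit, ?_⟩
  simpa only [sub_sub_cancel, mul_div_assoc] using
    frobNormSq_kronFamily_sub_le hunit hD0 hx1 hinner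

end
end

section
/- Let K ≥ 1, r > 0, σ_a > 0, σ ≥ 0, s ≥ 1, and 0 < ε' with s ε'/r² ≤ 1. Set η = √(1 − ε'/r²) and ν = √(r^{2/K} ε'/r²). For each k ∈ [K] let D⁰_k, D¹_k, D'¹_k ∈ ℝ^{m_k × s} be matrices with spectral norms ‖D⁰_k‖₂ ≤ √(3/2), ‖D¹_k‖₂ ≤ √(s/r^{2/K}), and ‖D'¹_k‖₂ ≤ √(s/r^{2/K}). Define M = (η D⁰_1 + ν D¹_1) ∗ ⋯ ∗ (η D⁰_K + ν D¹_K) and M' = (η D⁰_1 + ν D'¹_1) ∗ ⋯ ∗ (η D⁰_K + ν D'¹_K) (K-fold Khatri–Rao products, each in ℝ^{(∏_k m_k)×s}), and set Σ = σ_a² M Mᵀ + σ² I and Σ' = σ_a² M' M'ᵀ + σ² I. Then ‖Σ − Σ'‖₂ ≤ 3^{2K+1} σ_a² √(s ε'/r²). -/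
open Matrix Real

noncomputable section

/-- The `K`-fold Khatri–Rao (column-wise Kronecker) product of a family of matrices with
a common column index, realized on pi-type row indices. -/
def khatriRaoFamily {K s : ℕ} {m : Fin K → ℕ} (D : ∀ k, Matrix (Fin (m k)) (Fin s) ℝ) :
    Matrix (∀ k, Fin (m k)) (Fin s) ℝ :=
  Matrix.of fun i j => ∏ k, D k (i k) j

/-!
Khatri–Rao products satisfy `‖D₁ ∗ ⋯ ∗ D_K‖ ≤ ‖D₁‖ ⋯ ‖D_K‖`: the rows of `A ∗ B` with a fixed row
index `p` of `B` form `A * diagonal (B p)`, and summing over `p` only sees the column norms of `B`.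
As the product is multilinear in its factors, it is Lipschitz on balls. The mixed factors
`η D⁰_k + ν D¹_k` have norm at most `√(3/2) + x ≤ 9/4` and move by at most `2 x`, where
`x = √(s ε'/r²)`. Writing `M Mᵀ - M' M'ᵀ = M (M - M')ᵀ + (M - M') M'ᵀ` gives the bound
`4 K (9/4)^(2K-1) x`, and `(16/9) K ≤ 3 (16/9)^K` by Bernoulli's inequality.
-/

open scoped Matrix.Norms.L2Operator

/-- The Khatri–Rao product `A ∗ B` of two matrices: its `j`-th column is the Kronecker product of
the `j`-th columns of `A` and `B`. -/
def khatriRao {m p n α : Type*} [Mul α] (A : Matrix m n α) (B : Matrix p n α) :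
    Matrix (m × p) n α :=
  Matrix.of fun i j => A i.1 j * B i.2 j

theorem khatriRao_mulVec_apply {m p n α : Type*} [NonUnitalSemiring α] [Fintype n]
    (A : Matrix m n α) (B : Matrix p n α) (v : n → α) (i : m × p) :
    (khatriRao A B *ᵥ v) i = (A *ᵥ (B i.2 * v)) i.1 := by
  simp [khatriRao, mulVec, dotProduct, mul_assoc]

section L2OpNorm

variable {𝕜 m n p : Type*} [RCLike 𝕜] [Fintype m] [Fintype n] [DecidableEq n] [Fintype p]

theorem specNorm_eq_norm (A : Matrix m n ℝ) : specNorm A = ‖A‖ := rfl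

theorem norm_toLp_mulVec_le (A : Matrix m n 𝕜) (v : n → 𝕜) :
    ‖WithLp.toLp 2 (A *ᵥ v)‖ ≤ ‖A‖ * ‖WithLp.toLp 2 v‖ :=
  Matrix.l2_opNorm_mulVec A (WithLp.toLp 2 v)

theorem norm_le_of_norm_toLp_mulVec_le {A : Matrix m n 𝕜} {c : ℝ} (hc : 0 ≤ c)
    (h : ∀ v : n → 𝕜, ‖WithLp.toLp 2 (A *ᵥ v)‖ ≤ c * ‖WithLp.toLp 2 v‖) : ‖A‖ ≤ c :=
  ContinuousLinearMap.opNorm_le_bound _ hc fun v => h v.ofLp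

theorem norm_toLp_col_le (A : Matrix m n 𝕜) (j : n) : ‖WithLp.toLp 2 (A.col j)‖ ≤ ‖A‖ := by
  simpa using norm_toLp_mulVec_le A (Pi.single j 1)

theorem norm_submatrix_equiv_id (A : Matrix m n 𝕜) (e : p ≃ m) : ‖A.submatrix e id‖ = ‖A‖ := by
  have h_mulVec (v : n → 𝕜) :
      ‖WithLp.toLp 2 (A.submatrix e id *ᵥ v)‖ = ‖WithLp.toLp 2 (A *ᵥ v)‖ := by
    rw [EuclideanSpace.norm_eq, EuclideanSpace.norm_eq]
    exact congrArg Real.sqrt (e.sum_comp fun i => ‖(A *ᵥ v) i‖ ^ 2)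
  apply le_antisymm <;> refine norm_le_of_norm_toLp_mulVec_le (norm_nonneg _) fun v => ?_
  · exact h_mulVec v ▸ norm_toLp_mulVec_le A v
  · exact h_mulVec v ▸ norm_toLp_mulVec_le (A.submatrix e id) v

theorem norm_mul_conjTranspose_sub_le [DecidableEq m] (A B : Matrix m n 𝕜) :
    ‖A * Aᴴ - B * Bᴴ‖ ≤ (‖A‖ + ‖B‖) * ‖A - B‖ :=
  calc ‖A * Aᴴ - B * Bᴴ‖ = ‖A * (A - B)ᴴ + (A - B) * Bᴴ‖ := by
        rw [conjTranspose_sub, Matrix.mul_sub, Matrix.sub_mul, sub_add_sub_cancel]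
    _ ≤ ‖A‖ * ‖(A - B)ᴴ‖ + ‖A - B‖ * ‖Bᴴ‖ :=
        norm_add_le_of_le (l2_opNorm_mul _ _) (l2_opNorm_mul _ _)
    _ = (‖A‖ + ‖B‖) * ‖A - B‖ := by
        rw [l2_opNorm_conjTranspose, l2_opNorm_conjTranspose]
        ring

theorem norm_khatriRao_le_of_norm_col_le (A : Matrix m n 𝕜) {B : Matrix p n 𝕜} {c : ℝ}
    (hc : 0 ≤ c) (hB : ∀ j, ‖WithLp.toLp 2 (B.col j)‖ ≤ c) : ‖khatriRao A B‖ ≤ ‖A‖ * c := by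
  refine norm_le_of_norm_toLp_mulVec_le (by positivity) fun v => ?_
  refine le_of_sq_le_sq ?_ (by positivity)
  calc ‖WithLp.toLp 2 (khatriRao A B *ᵥ v)‖ ^ 2
      = ∑ q, ‖WithLp.toLp 2 (A *ᵥ (B q * v))‖ ^ 2 := by
        simp only [EuclideanSpace.norm_sq_eq, Fintype.sum_prod_type_right, khatriRao_mulVec_apply]
    _ ≤ ∑ q, (‖A‖ * ‖WithLp.toLp 2 (B q * v)‖) ^ 2 := by
        gcongr
        exact norm_toLp_mulVec_le A _
    _ = ‖A‖ ^ 2 * ∑ j, ‖WithLp.toLp 2 (B.col j)‖ ^ 2 * ‖v j‖ ^ 2 := by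
        simp only [mul_pow, ← Finset.mul_sum, EuclideanSpace.norm_sq_eq, Pi.mul_apply, norm_mul,
          Finset.sum_mul, col_apply]
        rw [Finset.sum_comm]
    _ ≤ ‖A‖ ^ 2 * ∑ j, c ^ 2 * ‖v j‖ ^ 2 := by
        gcongr with j
        exact hB j
    _ = (‖A‖ * c * ‖WithLp.toLp 2 v‖) ^ 2 := by
        rw [← Finset.mul_sum, mul_pow, mul_pow, EuclideanSpace.norm_sq_eq, mul_assoc]

end L2OpNorm

section KhatriRaoFamily

variable {K s : ℕ} {m : Fin K → ℕ}

theorem norm_toLp_col_khatriRaoFamily (D : ∀ k, Matrix (Fin (m k)) (Fin s) ℝ) (j : Fin s) :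
    ‖WithLp.toLp 2 ((khatriRaoFamily D).col j)‖ = ∏ k, ‖WithLp.toLp 2 ((D k).col j)‖ := by
  simp only [EuclideanSpace.norm_eq, khatriRaoFamily, col_apply, of_apply, norm_prod,
    ← Finset.prod_pow]
  rw [← Real.sqrt_prod _ fun _ _ => by positivity, Fintype.prod_sum]

theorem khatriRaoFamily_submatrix_consEquiv {m : Fin (K + 1) → ℕ}
    (D : ∀ k, Matrix (Fin (m k)) (Fin s) ℝ) :
    (khatriRaoFamily D).submatrix (Fin.consEquiv fun k => Fin (m k)) id =
      khatriRao (D 0) (khatriRaoFamily fun k => D k.succ) := by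
  ext i j
  simp [khatriRaoFamily, khatriRao, Fin.prod_univ_succ, Fin.consEquiv]

theorem norm_khatriRaoFamily_le [NeZero K] (D : ∀ k, Matrix (Fin (m k)) (Fin s) ℝ) :
    ‖khatriRaoFamily D‖ ≤ ∏ k, ‖D k‖ := by
  obtain ⟨n, rfl⟩ := Nat.exists_eq_succ_of_ne_zero (NeZero.ne K)
  rw [← norm_submatrix_equiv_id _ (Fin.consEquiv fun k => Fin (m k)),
    khatriRaoFamily_submatrix_consEquiv, Fin.prod_univ_succ]
  refine norm_khatriRao_le_of_norm_col_le _ (by positivity) fun j => ?_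
  rw [norm_toLp_col_khatriRaoFamily]
  gcongr with k
  exact norm_toLp_col_le _ j

theorem norm_khatriRaoFamily_le_pow [NeZero K] (D : ∀ k, Matrix (Fin (m k)) (Fin s) ℝ) :
    ‖khatriRaoFamily D‖ ≤ ‖D‖ ^ K :=
  calc ‖khatriRaoFamily D‖ ≤ ∏ k, ‖D k‖ := norm_khatriRaoFamily_le D
    _ ≤ ∏ _k : Fin K, ‖D‖ := by
        gcongr with k
        exact norm_le_pi_norm D k
    _ = ‖D‖ ^ K := by simp

/-- The Khatri–Rao product as a multilinear map in its factors. -/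
def khatriRaoMultilinear (s : ℕ) (m : Fin K → ℕ) :
    MultilinearMap ℝ (fun k => Matrix (Fin (m k)) (Fin s) ℝ)
      (Matrix (∀ k, Fin (m k)) (Fin s) ℝ) :=
  MultilinearMap.pi fun i => MultilinearMap.pi fun j =>
    (MultilinearMap.mkPiAlgebra ℝ (Fin K) ℝ).compLinearMap fun k => entryLinearMap ℝ ℝ (i k) j

theorem khatriRaoMultilinear_apply (D : ∀ k, Matrix (Fin (m k)) (Fin s) ℝ) :
    khatriRaoMultilinear s m D = khatriRaoFamily D := rfl

theorem norm_khatriRaoFamily_sub_le [NeZero K] (A B : ∀ k, Matrix (Fin (m k)) (Fin s) ℝ) :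
    ‖khatriRaoFamily A - khatriRaoFamily B‖ ≤ K * max ‖A‖ ‖B‖ ^ (K - 1) * ‖A - B‖ := by
  simpa [khatriRaoMultilinear_apply] using
    (khatriRaoMultilinear s m).norm_image_sub_le_of_bound zero_le_one
      (fun D => by simpa [khatriRaoMultilinear_apply] using norm_khatriRaoFamily_le D) A B

theorem norm_khatriRaoFamily_mul_transpose_sub_le [NeZero K]
    {A B : ∀ k, Matrix (Fin (m k)) (Fin s) ℝ} {c : ℝ} (hA : ‖A‖ ≤ c) (hB : ‖B‖ ≤ c) :
    ‖khatriRaoFamily A * (khatriRaoFamily A)ᵀ - khatriRaoFamily B * (khatriRaoFamily B)ᵀ‖ ≤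
      2 * K * c ^ (2 * K - 1) * ‖A - B‖ := by
  have hc : 0 ≤ c := (norm_nonneg A).trans hA
  have norm_le_pow {D : ∀ k, Matrix (Fin (m k)) (Fin s) ℝ} (hD : ‖D‖ ≤ c) :
      ‖khatriRaoFamily D‖ ≤ c ^ K := by
    grw [norm_khatriRaoFamily_le_pow, hD]
  simp only [← conjTranspose_eq_transpose_of_trivial]
  calc _ ≤ (‖khatriRaoFamily A‖ + ‖khatriRaoFamily B‖) * ‖khatriRaoFamily A - khatriRaoFamily B‖ :=
        norm_mul_conjTranspose_sub_le _ _
    _ ≤ (c ^ K + c ^ K) * (K * c ^ (K - 1) * ‖A - B‖) := by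
        gcongr
        · exact norm_le_pow hA
        · exact norm_le_pow hB
        · grw [norm_khatriRaoFamily_sub_le, max_le hA hB]
    _ = 2 * K * c ^ (2 * K - 1) * ‖A - B‖ := by
        have h_exp : 2 * K - 1 = K + (K - 1) := by have := NeZero.pos K; lia
        rw [h_exp, pow_add]
        ring

theorem norm_khatriRaoFamily_mixture_mul_transpose_sub_le [NeZero K]
    {D0 D1 D1' : ∀ k, Matrix (Fin (m k)) (Fin s) ℝ} {η ν a x : ℝ} (hη0 : 0 ≤ η) (hη1 : η ≤ 1)
    (hν : 0 ≤ ν) (hD0 : ‖D0‖ ≤ a) (hD1 : ν * ‖D1‖ ≤ x) (hD1' : ν * ‖D1'‖ ≤ x) :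
    ‖khatriRaoFamily (η • D0 + ν • D1) * (khatriRaoFamily (η • D0 + ν • D1))ᵀ -
        khatriRaoFamily (η • D0 + ν • D1') * (khatriRaoFamily (η • D0 + ν • D1'))ᵀ‖ ≤
      4 * K * (a + x) ^ (2 * K - 1) * x := by
  have norm_smul_ν (D : ∀ k, Matrix (Fin (m k)) (Fin s) ℝ) : ‖ν • D‖ = ν * ‖D‖ :=
    norm_smul_of_nonneg hν D
  have norm_mixture_le {D : ∀ k, Matrix (Fin (m k)) (Fin s) ℝ} (hD : ν * ‖D‖ ≤ x) :
      ‖η • D0 + ν • D‖ ≤ a + x := by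
    grw [norm_add_le, norm_smul_of_nonneg hη0, hη1, one_mul, hD0, norm_smul_ν, hD]
  have norm_sub_mixtures_le : ‖(η • D0 + ν • D1) - (η • D0 + ν • D1')‖ ≤ 2 * x := by
    grw [add_sub_add_left_eq_sub, norm_sub_le, norm_smul_ν, norm_smul_ν, hD1, hD1', two_mul]
  have h_radius : 0 ≤ a + x := (norm_nonneg _).trans (norm_mixture_le hD1)
  calc _ ≤ 2 * K * (a + x) ^ (2 * K - 1) * (2 * x) := by
        grw [norm_khatriRaoFamily_mul_transpose_sub_le (norm_mixture_le hD1)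
          (norm_mixture_le hD1'), norm_sub_mixtures_le]
    _ = 4 * K * (a + x) ^ (2 * K - 1) * x := by ring

theorem norm_le_of_forall_specNorm_le {D : ∀ k, Matrix (Fin (m k)) (Fin s) ℝ} {c : ℝ}
    (hc : 0 ≤ c) (hD : ∀ k, specNorm (D k) ≤ c) : ‖D‖ ≤ c :=
  (pi_norm_le_iff_of_nonneg hc).2 hD

end KhatriRaoFamily

theorem four_mul_mul_pow_le_three_pow {K : ℕ} (hK : 0 < K) :
    4 * K * (9 / 4 : ℝ) ^ (2 * K - 1) ≤ 3 ^ (2 * K + 1) := by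
  have h_bernoulli : 1 + K * (7 / 9 : ℝ) ≤ (1 + 7 / 9) ^ K :=
    one_add_mul_le_pow (by norm_num) K
  have h_linear : 16 / 9 * K ≤ 3 * (1 + 7 / 9 : ℝ) ^ K := by
    linarith [K.cast_nonneg (α := ℝ)]
  calc 4 * K * (9 / 4 : ℝ) ^ (2 * K - 1) = 16 / 9 * K * (81 / 16) ^ K := by
        obtain ⟨n, rfl⟩ := Nat.exists_eq_succ_of_ne_zero hK.ne'
        rw [show 2 * n.succ - 1 = 2 * n + 1 by lia, pow_succ, pow_succ, pow_mul]
        norm_num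
        ring
    _ ≤ 3 * (1 + 7 / 9) ^ K * (81 / 16) ^ K := by
        grw [h_linear]
    _ = 3 ^ (2 * K + 1) := by
        rw [mul_assoc, ← mul_pow, pow_succ', pow_mul]
        norm_num

theorem sqrt_three_halves_le : √(3 / 2) ≤ 5 / 4 := by
  rw [Real.sqrt_le_left (by norm_num)]
  norm_num

theorem sqrt_mul_div_mul_sqrt_div {R a b c : ℝ} (hR : 0 < R) (h : 0 ≤ R * a / b) :
    √(R * a / b) * √(c / R) = √(c * a / b) := by
  rw [← Real.sqrt_mul h]
  congr 1
  field_simp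

/-- **Covariance perturbation bound, Khatri–Rao case**: for mixtures
`η D⁰_k + ν D¹_k` with `η = √(1 - ε'/r²)`, `ν = √(r^{2/K} ε'/r²)` and spectral norm
bounds `‖D⁰_k‖₂ ≤ √(3/2)`, `‖D¹_k‖₂, ‖D'¹_k‖₂ ≤ √(s/r^{2/K})`, the covariance matrices
built from the Khatri–Rao products satisfy `‖Σ - Σ'‖₂ ≤ 3^{2K+1} σa² √(s ε'/r²)`. -/
theorem covariance_diff_bound_khatriRao
    (K s : ℕ) (hK : 0 < K) (hs : 1 ≤ s) (m : Fin K → ℕ)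
    (r σa σ ε' : ℝ) (hr : 0 < r) (hσa : 0 < σa) (hσ : 0 ≤ σ)
    (hε0 : 0 < ε') (hε : (s : ℝ) * ε' / r ^ 2 ≤ 1)
    (D0 D1 D1' : ∀ k, Matrix (Fin (m k)) (Fin s) ℝ)
    (hD0 : ∀ k, specNorm (D0 k) ≤ Real.sqrt (3 / 2))
    (hD1 : ∀ k, specNorm (D1 k) ≤ Real.sqrt ((s : ℝ) / r ^ ((2 : ℝ) / (K : ℝ))))
    (hD1' : ∀ k, specNorm (D1' k) ≤ Real.sqrt ((s : ℝ) / r ^ ((2 : ℝ) / (K : ℝ)))) :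
    specNorm
        ((σa ^ 2 •
            (khatriRaoFamily (fun k =>
                Real.sqrt (1 - ε' / r ^ 2) • D0 k +
                  Real.sqrt (r ^ ((2 : ℝ) / (K : ℝ)) * ε' / r ^ 2) • D1 k) *
              (khatriRaoFamily (fun k =>
                Real.sqrt (1 - ε' / r ^ 2) • D0 k +
                  Real.sqrt (r ^ ((2 : ℝ) / (K : ℝ)) * ε' / r ^ 2) • D1 k))ᵀ) +
            σ ^ 2 • (1 : Matrix (∀ k, Fin (m k)) (∀ k, Fin (m k)) ℝ)) -
          (σa ^ 2 •
            (khatriRaoFamily (fun k =>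
                Real.sqrt (1 - ε' / r ^ 2) • D0 k +
                  Real.sqrt (r ^ ((2 : ℝ) / (K : ℝ)) * ε' / r ^ 2) • D1' k) *
              (khatriRaoFamily (fun k =>
                Real.sqrt (1 - ε' / r ^ 2) • D0 k +
                  Real.sqrt (r ^ ((2 : ℝ) / (K : ℝ)) * ε' / r ^ 2) • D1' k))ᵀ) +
            σ ^ 2 • (1 : Matrix (∀ k, Fin (m k)) (∀ k, Fin (m k)) ℝ))) ≤
      3 ^ (2 * K + 1) * σa ^ 2 * Real.sqrt ((s : ℝ) * ε' / r ^ 2) := by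
  have : NeZero K := ⟨hK.ne'⟩
  set R : ℝ := r ^ ((2 : ℝ) / K)
  set x : ℝ := √(s * ε' / r ^ 2)
  have hR : 0 < R := by positivity
  have hη : √(1 - ε' / r ^ 2) ≤ 1 := Real.sqrt_le_one.2 (sub_le_self 1 (by positivity))
  have hx : x ≤ 1 := Real.sqrt_le_one.2 hε
  have ν_mul_norm_le {D : ∀ k, Matrix (Fin (m k)) (Fin s) ℝ}
      (hD : ∀ k, specNorm (D k) ≤ √(s / R)) : √(R * ε' / r ^ 2) * ‖D‖ ≤ x := by
    grw [norm_le_of_forall_specNorm_le (Real.sqrt_nonneg _) hD,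
      sqrt_mul_div_mul_sqrt_div hR (by positivity)]
  have hD0_norm : ‖D0‖ ≤ 5 / 4 :=
    norm_le_of_forall_specNorm_le (by norm_num) fun k => (hD0 k).trans sqrt_three_halves_le
  rw [specNorm_eq_norm, add_sub_add_right_eq_sub, ← smul_sub, norm_smul_of_nonneg (sq_nonneg σa),
    mul_comm _ (σa ^ 2), mul_assoc]
  gcongr
  calc _ ≤ 4 * K * (5 / 4 + x) ^ (2 * K - 1) * x :=
        norm_khatriRaoFamily_mixture_mul_transpose_sub_le (Real.sqrt_nonneg _) hη
          (Real.sqrt_nonneg _) hD0_norm (ν_mul_norm_le hD1) (ν_mul_norm_le hD1')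
    _ ≤ 4 * K * (9 / 4) ^ (2 * K - 1) * x := by
        gcongr
        linarith
    _ ≤ 3 ^ (2 * K + 1) * x := by grw [four_mul_mul_pow_le_three_pow hK]

end
end
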